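/- arXiv:2005.02621 — 6 statements merged into one kernel-verified Lean document; each statement's English description precedes it below -/
import Mathlib

section
/- Let T > 0 and let θ, μ ∈ (0,1) satisfy θ + μ > 1. Let f : [0,T] → ℝ be θ-Hölder continuous and g : [0,T] → ℝ be μ-Hölder continuous. Then for every 0 ≤ a < b ≤ T the sequence of Riemann sums S_n = Σ_{k=0}^{n−1} f(kT/n) · ( g( min(max((k+1)T/n, a), b) ) − g( min(max(kT/n, a), b) ) ) converges as n → ∞; its limit is called the Young integral ∫_a^b f dg. -/
/-!
The function `g ∘ clamp` inherits the Hölder bound of `g`, so the claim is about the left Riemann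
sums of `f` against a single Hölder integrator on the whole of `[0,T]`. These sums form a Cauchy
sequence: `S_n` and `S_m` are both close to the sum over the common refinement `S_{nm}`.

The comparison of `S_n` with `S_{nm}` is Young's estimate in discrete form, `young_block`: on a
block of `m` consecutive points the left sum differs from its one-step approximation by at most
`C m^(θ+μ)`. It is proved by splitting a block of at most `2^(j+1)` points into two blocks of at
most `2^j` points. The defect of additivity is a product of one increment of each function,
and the errors accumulate geometrically since `2 < 2^(θ+μ)`. Summing over the `n` blocks of length
`T/n` leaves an error `O(n · (T/n)^(θ+μ))`, which tends to zero.
-/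

open Filter

/-- The set of Hölder quotients `|f t - f s| / (t - s)^θ` over `0 ≤ s < t ≤ T`.
`f` is θ-Hölder continuous on `[0,T]` iff this set is bounded above, and its
supremum is the Hölder seminorm `‖f‖_θ`. -/
def holderSet (T θ : ℝ) (f : ℝ → ℝ) : Set ℝ :=
  {r | ∃ s t : ℝ, 0 ≤ s ∧ s < t ∧ t ≤ T ∧ r = |f t - f s| / (t - s) ^ θ}

/-- The Riemann sum `S_n = Σ_{k=0}^{n-1} f(kT/n) ⬝ (g(min(max((k+1)T/n, a), b)) -
g(min(max(kT/n, a), b)))` along the uniform partition, with evaluation points clamped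
to `[a,b]`. -/
noncomputable def riemannSum (T a b : ℝ) (f g : ℝ → ℝ) (n : ℕ) : ℝ :=
  ∑ k ∈ Finset.range n,
    f (k * T / n) *
      (g (min (max ((k + 1) * T / n) a) b) - g (min (max (k * T / n) a) b))

/-- The error of replacing the left sum of `u` against the increments of `v` over the `m` steps
that start at `s` by the single step from `s` to `s + m`. -/
def blockError (u v : ℕ → ℝ) (s m : ℕ) : ℝ :=
  ∑ i ∈ Finset.range m, u (s + i) * (v (s + i + 1) - v (s + i)) - u s * (v (s + m) - v s)

/-- The defect of additivity of `blockError` is the product of an increment of `u` over the first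
block and an increment of `v` over the second. -/
lemma blockError_add (u v : ℕ → ℝ) (s p q : ℕ) :
    blockError u v s (p + q) = blockError u v s p + blockError u v (s + p) q
      + (u (s + p) - u s) * (v (s + p + q) - v (s + p)) := by
  simp only [blockError, Finset.sum_range_add, ← add_assoc]
  ring

/-- Young's estimate for blocks of at most `2^j` points. -/
lemma young_dyadic {θ μ A B : ℝ} (hθ : 0 < θ) (hμ : 0 < μ) (hθμ : 1 < θ + μ)
    (hA : 0 ≤ A) (hB : 0 ≤ B) {u v : ℕ → ℝ}
    (hu : ∀ i k : ℕ, |u (i + k) - u i| ≤ A * (k : ℝ) ^ θ)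
    (hv : ∀ i k : ℕ, |v (i + k) - v i| ≤ B * (k : ℝ) ^ μ) (j : ℕ) :
    ∀ s m : ℕ, m ≤ 2 ^ j →
      |blockError u v s m| ≤ A * B / ((2 : ℝ) ^ (θ + μ) - 2) * ((2 : ℝ) ^ j) ^ (θ + μ) := by
  have h2 : (0 : ℝ) < (2 : ℝ) ^ (θ + μ) - 2 := by
    have := Real.rpow_lt_rpow_of_exponent_lt (one_lt_two : (1 : ℝ) < 2) hθμ
    rw [Real.rpow_one] at this
    linarith
  have hK : 0 ≤ A * B / ((2 : ℝ) ^ (θ + μ) - 2) := by positivity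
  induction j with
  | zero =>
    intro s m hm
    have : blockError u v s m = 0 := by
      rw [pow_zero] at hm
      interval_cases m <;> simp [blockError]
    rw [this, abs_zero]
    positivity
  | succ j ih =>
    intro s m hm
    rcases le_total m (2 ^ j) with h | h
    · refine (ih s m h).trans ?_
      gcongr
      · norm_num
      · omega
    · obtain ⟨q, rfl⟩ := Nat.exists_eq_add_of_le h
      have hq : q ≤ 2 ^ j := by rw [pow_succ] at hm; omega
      have hP : (0 : ℝ) < (2 : ℝ) ^ j := by positivity
      have h1 := ih s (2 ^ j) le_rfl
      have h3 := ih (s + 2 ^ j) q hq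
      have h4 : |(u (s + 2 ^ j) - u s) * (v (s + 2 ^ j + q) - v (s + 2 ^ j))|
          ≤ A * B * ((2 : ℝ) ^ j) ^ (θ + μ) := by
        have e1 := hu s (2 ^ j)
        have e2 : |v (s + 2 ^ j + q) - v (s + 2 ^ j)| ≤ B * ((2 : ℝ) ^ j) ^ μ := by
          refine (hv (s + 2 ^ j) q).trans ?_
          gcongr
          exact_mod_cast hq
        push_cast at e1
        rw [abs_mul, Real.rpow_add hP]
        refine (mul_le_mul e1 e2 (abs_nonneg _) (by positivity)).trans_eq (by ring)
      rw [blockError_add]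
      refine (abs_add_three _ _ _).trans ((add_le_add (add_le_add h1 h3) h4).trans_eq ?_)
      rw [pow_succ, Real.mul_rpow hP.le zero_le_two]
      field_simp
      ring

/-- Young's estimate for a block of `m` points. -/
lemma young_block {θ μ A B : ℝ} (hθ : 0 < θ) (hμ : 0 < μ) (hθμ : 1 < θ + μ)
    (hA : 0 ≤ A) (hB : 0 ≤ B) {u v : ℕ → ℝ}
    (hu : ∀ i k : ℕ, |u (i + k) - u i| ≤ A * (k : ℝ) ^ θ)
    (hv : ∀ i k : ℕ, |v (i + k) - v i| ≤ B * (k : ℝ) ^ μ) (s m : ℕ) (hm : 0 < m) :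
    |blockError u v s m| ≤
      A * B * ((2 : ℝ) ^ (θ + μ) / ((2 : ℝ) ^ (θ + μ) - 2)) * (m : ℝ) ^ (θ + μ) := by
  have h2 : (0 : ℝ) < (2 : ℝ) ^ (θ + μ) - 2 := by
    have := Real.rpow_lt_rpow_of_exponent_lt (one_lt_two : (1 : ℝ) < 2) hθμ
    rw [Real.rpow_one] at this
    linarith
  have hlog : m < 2 ^ (Nat.log 2 m + 1) := Nat.lt_pow_succ_log_self one_lt_two m
  have hlog' : 2 ^ Nat.log 2 m ≤ m := Nat.pow_log_le_self 2 hm.ne'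
  have hle : (2 : ℝ) ^ (Nat.log 2 m + 1) ≤ 2 * m := by
    rw [pow_succ, mul_comm]
    gcongr
    exact_mod_cast hlog'
  refine (young_dyadic hθ hμ hθμ hA hB hu hv _ s m hlog.le).trans ?_
  calc _ ≤ A * B / ((2 : ℝ) ^ (θ + μ) - 2) * (2 * m : ℝ) ^ (θ + μ) := by gcongr
    _ = _ := by
      rw [Real.mul_rpow zero_le_two (Nat.cast_nonneg m)]
      ring

/-- The difference between a left sum and its coarsening with step `m` is the sum of the errors
of the blocks. -/
lemma sum_sub_coarse (u v : ℕ → ℝ) (n m : ℕ) :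
    ∑ i ∈ Finset.range (n * m), u i * (v (i + 1) - v i)
      - ∑ k ∈ Finset.range n, u (k * m) * (v ((k + 1) * m) - v (k * m))
      = ∑ k ∈ Finset.range n, blockError u v (k * m) m := by
  induction n with
  | zero => simp
  | succ n ih =>
    rw [Finset.sum_range_succ, Finset.sum_range_succ, ← ih, blockError, add_mul, one_mul,
      Finset.sum_range_add]
    ring

/-- The left Riemann sum of `F` against `G` over the uniform partition of `[0,T]`. -/
noncomputable def leftSum (T : ℝ) (F G : ℝ → ℝ) (n : ℕ) : ℝ :=
  ∑ k ∈ Finset.range n, F (k * T / n) * (G ((k + 1) * T / n) - G (k * T / n))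

/-- Refining the partition of `n` intervals changes the left sum by `O(n^(1-θ-μ))`, uniformly in the
refinement factor `m`. -/
lemma leftSum_refine {T θ μ A B : ℝ} (hT : 0 < T) (hθ : 0 < θ) (hμ : 0 < μ) (hθμ : 1 < θ + μ)
    (hA : 0 ≤ A) (hB : 0 ≤ B) {F G : ℝ → ℝ}
    (hF : ∀ s t, s ≤ t → |F t - F s| ≤ A * (t - s) ^ θ)
    (hG : ∀ s t, s ≤ t → |G t - G s| ≤ B * (t - s) ^ μ) {n m : ℕ} (hn : 0 < n) (hm : 0 < m) :
    |leftSum T F G (n * m) - leftSum T F G n| ≤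
      A * B * ((2 : ℝ) ^ (θ + μ) / ((2 : ℝ) ^ (θ + μ) - 2)) * T ^ (θ + μ)
        * (n : ℝ) ^ (1 - (θ + μ)) := by
  have hn' : (0 : ℝ) < n := by exact_mod_cast hn
  have hm' : (0 : ℝ) < m := by exact_mod_cast hm
  set δ : ℝ := T / (n * m) with hδ
  have hδ0 : 0 < δ := by positivity
  have holder : ∀ {C ρ : ℝ} {H : ℝ → ℝ}, (∀ s t, s ≤ t → |H t - H s| ≤ C * (t - s) ^ ρ) →
      ∀ i k : ℕ, |H (((i + k : ℕ) : ℝ) * δ) - H ((i : ℝ) * δ)| ≤ (C * δ ^ ρ) * (k : ℝ) ^ ρ := by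
    intro C ρ H hH i k
    have := hH (i * δ) ((i + k : ℕ) * δ) (by push_cast; nlinarith [Nat.cast_nonneg (α := ℝ) k])
    refine this.trans_eq ?_
    have e : ((i + k : ℕ) : ℝ) * δ - i * δ = δ * k := by push_cast; ring
    rw [e, Real.mul_rpow hδ0.le (Nat.cast_nonneg k)]
    ring
  have fine : leftSum T F G (n * m) = ∑ i ∈ Finset.range (n * m),
      F ((i : ℝ) * δ) * (G (((i + 1 : ℕ) : ℝ) * δ) - G ((i : ℝ) * δ)) := by
    simp only [leftSum, hδ, Nat.cast_mul, Nat.cast_add, Nat.cast_one, mul_div_assoc]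
  have coarse : leftSum T F G n = ∑ k ∈ Finset.range n,
      F (((k * m : ℕ) : ℝ) * δ)
        * (G ((((k + 1) * m : ℕ) : ℝ) * δ) - G (((k * m : ℕ) : ℝ) * δ)) := by
    have e : ∀ x : ℝ, x * m * δ = x * T / n := by
      intro x
      rw [hδ]
      field_simp
    simp only [leftSum, Nat.cast_mul, Nat.cast_add, Nat.cast_one, e]
  rw [fine, coarse, sum_sub_coarse (fun i : ℕ => F ((i : ℝ) * δ)) (fun i : ℕ => G ((i : ℝ) * δ))]
  refine (Finset.abs_sum_le_sum_abs _ _).trans ?_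
  refine (Finset.sum_le_sum fun k _ => young_block hθ hμ hθμ (A := A * δ ^ θ) (B := B * δ ^ μ)
    (by positivity) (by positivity) (holder hF) (holder hG) (k * m) m hm).trans_eq ?_
  have e1 : T ^ (θ + μ) = δ ^ θ * δ ^ μ * (m : ℝ) ^ (θ + μ) * (n : ℝ) ^ (θ + μ) := by
    rw [← Real.rpow_add hδ0, ← Real.mul_rpow hδ0.le hm'.le,
      ← Real.mul_rpow (by positivity) hn'.le]
    congr 1
    rw [hδ]
    field_simp
  rw [Finset.sum_const, Finset.card_range, nsmul_eq_mul, e1, Real.rpow_sub hn', Real.rpow_one]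
  have : (n : ℝ) ^ (θ + μ) ≠ 0 := by positivity
  field_simp

/-- The sums over `n` and `m` intervals are compared through their common refinement with `n * m`
intervals. -/
lemma leftSum_cauchy {T θ μ A B : ℝ} (hT : 0 < T) (hθ : 0 < θ) (hμ : 0 < μ) (hθμ : 1 < θ + μ)
    (hA : 0 ≤ A) (hB : 0 ≤ B) {F G : ℝ → ℝ}
    (hF : ∀ s t, s ≤ t → |F t - F s| ≤ A * (t - s) ^ θ)
    (hG : ∀ s t, s ≤ t → |G t - G s| ≤ B * (t - s) ^ μ) :
    CauchySeq (leftSum T F G) := by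
  set C := A * B * ((2 : ℝ) ^ (θ + μ) / ((2 : ℝ) ^ (θ + μ) - 2)) * T ^ (θ + μ)
  have lim : Tendsto (fun n : ℕ => C * (n : ℝ) ^ (1 - (θ + μ))) atTop (nhds 0) := by
    have := ((tendsto_rpow_neg_atTop (sub_pos.2 hθμ)).comp
      tendsto_natCast_atTop_atTop).const_mul C
    simpa [Function.comp_def] using this
  refine Metric.cauchySeq_iff.2 fun ε hε => ?_
  obtain ⟨N, hN⟩ := eventually_atTop.1
    ((lim.eventually_lt_const (half_pos hε)).and (eventually_gt_atTop 0))
  refine ⟨N, fun n hn m hm => ?_⟩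
  obtain ⟨hn1, hn0⟩ := hN n hn
  obtain ⟨hm1, hm0⟩ := hN m hm
  have h1 := leftSum_refine hT hθ hμ hθμ hA hB hF hG hn0 hm0
  have h2 := leftSum_refine hT hθ hμ hθμ hA hB hF hG hm0 hn0
  rw [mul_comm m n] at h2
  rw [abs_sub_comm] at h1
  have h3 := abs_sub_le (leftSum T F G n) (leftSum T F G (n * m)) (leftSum T F G m)
  rw [Real.dist_eq]
  linarith

/-- A Hölder function on `[0,T]` composed with the clamp to `[a,b] ⊆ [0,T]` is globally Hölder,
because the clamp is monotone and 1-Lipschitz. -/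
lemma holder_clamp {T ρ : ℝ} {h : ℝ → ℝ} (hρ : 0 < ρ) (hh : BddAbove (holderSet T ρ h)) :
    ∃ C : ℝ, 0 ≤ C ∧ ∀ a b : ℝ, 0 ≤ a → a ≤ b → b ≤ T → ∀ s t : ℝ, s ≤ t →
      |h (min (max t a) b) - h (min (max s a) b)| ≤ C * (t - s) ^ ρ := by
  obtain ⟨C, hC⟩ := hh
  refine ⟨max C 0, le_max_right _ _, fun a b ha hab hb s t hst => ?_⟩
  have hs0 : 0 ≤ min (max s a) b := le_min (ha.trans (le_max_right _ _)) (ha.trans hab)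
  have htT : min (max t a) b ≤ T := (min_le_right _ _).trans hb
  have hmono : min (max s a) b ≤ min (max t a) b := by gcongr
  have hlip : min (max t a) b - min (max s a) b ≤ t - s := by
    simp only [min_def, max_def]
    split_ifs <;> linarith
  rcases hmono.eq_or_lt with e | hlt
  · rw [e, sub_self, abs_zero]
    have := sub_nonneg.2 hst
    positivity
  · have hpos := sub_pos.2 hlt
    have := hC ⟨_, _, hs0, hlt, htT, rfl⟩
    rw [div_le_iff₀ (by positivity)] at this
    refine this.trans ?_
    gcongr
    exact le_max_left _ _

/-- for `θ + μ > 1`, a θ-Hölder `f` and a μ-Hölder `g` on `[0,T]`,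
and `0 ≤ a < b ≤ T`, the Riemann sums converge: the Young integral `∫_a^b f dg`
exists. -/
theorem young_integral_exists
    (T θ μ : ℝ) (hT : 0 < T)
    (hθ : θ ∈ Set.Ioo (0 : ℝ) 1) (hμ : μ ∈ Set.Ioo (0 : ℝ) 1) (hθμ : 1 < θ + μ)
    (f g : ℝ → ℝ)
    (hf : BddAbove (holderSet T θ f)) (hg : BddAbove (holderSet T μ g))
    (a b : ℝ) (ha : 0 ≤ a) (hab : a < b) (hb : b ≤ T) :
    ∃ L : ℝ, Tendsto (fun n : ℕ => riemannSum T a b f g n) atTop (nhds L) := by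
  obtain ⟨A, hA, hF⟩ := holder_clamp hθ.1 hf
  obtain ⟨B, hB, hG⟩ := holder_clamp hμ.1 hg
  obtain ⟨L, hL⟩ := cauchySeq_tendsto_of_complete
    (leftSum_cauchy hT hθ.1 hμ.1 hθμ hA hB (hF 0 T le_rfl hT.le le_rfl) (hG a b ha hab.le hb))
  refine ⟨L, hL.congr fun n => Finset.sum_congr rfl fun k hk => ?_⟩
  -- The partition points lie in `[0,T]`, so clamping the argument of `f` changes nothing.
  have hkn : (k : ℝ) < n := by exact_mod_cast Finset.mem_range.1 hk
  have hn : (0 : ℝ) < n := (Nat.cast_nonneg k).trans_lt hkn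
  have h0 : 0 ≤ (k : ℝ) * T / n := by positivity
  have h1 : (k : ℝ) * T / n ≤ T := by
    rw [div_le_iff₀ hn, mul_comm T]
    gcongr
  simp only [max_eq_left h0, min_eq_left h1]
end

section
/- Let T > 0 and θ, μ ∈ (0,1) with θ + μ > 1. There exists a constant c > 0, depending only on θ and μ, such that for every θ-Hölder continuous f : [0,T] → ℝ, every μ-Hölder continuous g : [0,T] → ℝ, every 0 ≤ a < b ≤ T, and every real number L which is the limit of the Riemann sums S_n = Σ_{k=0}^{n−1} f(kT/n)·( g(min(max((k+1)T/n, a), b)) − g(min(max(kT/n, a), b)) ), one has the Young–Loève estimate |L − f(a)(g(b) − g(a))| ≤ c · ‖f‖_θ · ‖g‖_μ · (b − a)^{θ+μ}. -/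
/-!
Write `p = θ + μ > 1`. For a monotone sequence of points `x i ≤ ⋯ ≤ x j`, let `I(i, j)` be the
left-point Riemann sum of `f dg` along it minus `f (x i) * (g (x j) - g (x i))` (`youngDefect`).
Then `I(i, j) = I(i, m) + I(m, j) + (f (x m) - f (x i)) * (g (x j) - g (x m))`, and `I` vanishes on
a single step. Cutting out the step that straddles the midpoint of `[x i, x j]` leaves two pieces
of length at most `w / 2`, where `w = x j - x i`, and two products each bounded by
`‖f‖_θ ‖g‖_μ w ^ p`. Induction on the number of steps gives `|I(i, j)| ≤ C ‖f‖_θ ‖g‖_μ w ^ p` as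
soon as `2 C (1 / 2) ^ p + 2 ≤ C`, which `C = 2 / (1 - 2 ^ (1 - p))` satisfies because `p > 1`
(`abs_youngDefect_le`).

The sum `riemannSum` evaluates `f` at the grid point `k T / n` and not at its projection to
`[a, b]`. When the `k`-th increment of `g` is nonzero these points are at distance at most `T / n`
(`abs_clamp_error_le`), so the projection changes the sum by at most
`n ‖f‖_θ ‖g‖_μ (T / n) ^ p`, which tends to zero since `p > 1`. Passing to the limit in the
estimate for the projected grid gives the result.
-/

open Filter

/-- The Hölder seminorm `‖f‖_θ = sup_{0 ≤ s < t ≤ T} |f t - f s| / (t-s)^θ`. -/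
noncomputable def holderNorm (T θ : ℝ) (f : ℝ → ℝ) : ℝ :=
  sSup (holderSet T θ f)

/-- Left-point Riemann sum of `f dg` along `x i, …, x j`, minus its one-step approximation
`f (x i) * (g (x j) - g (x i))`. -/
noncomputable def youngDefect (f g : ℝ → ℝ) (x : ℕ → ℝ) (i j : ℕ) : ℝ :=
  ∑ k ∈ Finset.Ico i j, f (x k) * (g (x (k + 1)) - g (x k)) - f (x i) * (g (x j) - g (x i))

/-- Chen-type relation: the failure of additivity of the defect is a product of increments. -/
lemma youngDefect_split (f g : ℝ → ℝ) (x : ℕ → ℝ) {i m j : ℕ} (him : i ≤ m) (hmj : m ≤ j) :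
    youngDefect f g x i j = youngDefect f g x i m + youngDefect f g x m j
      + (f (x m) - f (x i)) * (g (x j) - g (x m)) := by
  unfold youngDefect
  rw [← Finset.sum_Ico_consecutive _ him hmj]
  ring

lemma youngDefect_self (f g : ℝ → ℝ) (x : ℕ → ℝ) (i : ℕ) : youngDefect f g x i i = 0 := by
  simp [youngDefect]

lemma youngDefect_succ (f g : ℝ → ℝ) (x : ℕ → ℝ) (i : ℕ) :
    youngDefect f g x i (i + 1) = 0 := by
  simp [youngDefect]

/-- Discrete Young–Loève estimate, uniform in the number of steps `j - i ≤ n`. The condition on `C`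
says that two halves of length `w / 2` and two products of increments fit into the bound. -/
lemma abs_youngDefect_le {T θ μ F G C : ℝ} {f g : ℝ → ℝ} (hθ : 0 < θ) (hμ : 0 < μ)
    (hF : 0 ≤ F) (hG : 0 ≤ G) (hC : 0 ≤ C)
    (hf : ∀ s t, 0 ≤ s → s ≤ t → t ≤ T → |f t - f s| ≤ F * (t - s) ^ θ)
    (hg : ∀ s t, 0 ≤ s → s ≤ t → t ≤ T → |g t - g s| ≤ G * (t - s) ^ μ)
    (hCle : 2 * C * (1 / 2) ^ (θ + μ) + 2 ≤ C)
    {x : ℕ → ℝ} (hx : Monotone x) (hx0 : ∀ k, 0 ≤ x k) (hxT : ∀ k, x k ≤ T) :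
    ∀ n i j : ℕ, i ≤ j → j - i ≤ n →
      |youngDefect f g x i j| ≤ C * (F * G) * (x j - x i) ^ (θ + μ) := by
  intro n
  induction n with
  | zero =>
    intro i j hij hn
    obtain rfl : i = j := by omega
    rw [youngDefect_self, abs_zero]
    have := Real.rpow_nonneg (sub_nonneg.2 (le_refl (x i))) (θ + μ)
    positivity
  | succ n ih =>
    intro i j hij hn
    rcases hij.eq_or_lt with rfl | hlt
    · rw [youngDefect_self, abs_zero]
      have := Real.rpow_nonneg (sub_nonneg.2 (le_refl (x i))) (θ + μ)
      positivity
    set w := x j - x i with hw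
    have hw0 : 0 ≤ w := sub_nonneg.2 (hx hij)
    have hw2 : 0 ≤ w / 2 := by linarith
    -- `[x m, x (m + 1)]` is the step that straddles the midpoint of `[x i, x j]`.
    obtain ⟨m, him, hmj, hleft, hright⟩ :
        ∃ m, i ≤ m ∧ m + 1 ≤ j ∧ x m - x i ≤ w / 2 ∧ x j - x (m + 1) ≤ w / 2 := by
      classical
      have hex : ∃ k, i < k ∧ (k = j ∨ w / 2 < x k - x i) := ⟨j, hlt, Or.inl rfl⟩
      obtain ⟨h1, h2⟩ := Nat.find_spec hex
      have h3 : Nat.find hex ≤ j := Nat.find_min' hex ⟨hlt, Or.inl rfl⟩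
      have h4 := fun m => Nat.find_min (H := hex) (m := m)
      generalize Nat.find hex = M at h1 h2 h3 h4
      obtain ⟨m, rfl⟩ : ∃ m, M = m + 1 := ⟨M - 1, by omega⟩
      refine ⟨m, by omega, h3, ?_, ?_⟩
      · rcases (Nat.lt_succ_iff.1 h1).eq_or_lt with rfl | him
        · rw [sub_self]; exact hw2
        · by_contra! hcon
          exact h4 m (Nat.lt_succ_self m) ⟨him, Or.inr hcon⟩
      · rcases h2 with rfl | h2
        · rw [sub_self]; exact hw2
        · linarith
    have half : ∀ d, 0 ≤ d → d ≤ w / 2 →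
        C * (F * G) * d ^ (θ + μ) ≤ C * (F * G) * ((1 / 2) ^ (θ + μ) * w ^ (θ + μ)) := by
      intro d hd hdw
      rw [← Real.mul_rpow (by norm_num) hw0]
      have : d ^ (θ + μ) ≤ (1 / 2 * w) ^ (θ + μ) :=
        Real.rpow_le_rpow hd (by linarith) (by linarith)
      gcongr
    have cross : ∀ p q r, i ≤ p → p ≤ q → q ≤ r → r ≤ j →
        |(f (x q) - f (x p)) * (g (x r) - g (x q))| ≤ F * G * w ^ (θ + μ) := by
      intro p q r hp hq hr hrj
      have e1 := hx hp
      have e2 := hx hq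
      have e3 := hx hr
      have e4 := hx hrj
      rw [abs_mul, Real.rpow_add' hw0 (by linarith)]
      have a1 : |f (x q) - f (x p)| ≤ F * w ^ θ :=
        (hf _ _ (hx0 p) e2 (hxT q)).trans
          (mul_le_mul_of_nonneg_left
            (Real.rpow_le_rpow (by linarith) (by linarith) hθ.le) hF)
      have a2 : |g (x r) - g (x q)| ≤ G * w ^ μ :=
        (hg _ _ (hx0 q) e3 (hxT r)).trans
          (mul_le_mul_of_nonneg_left
            (Real.rpow_le_rpow (by linarith) (by linarith) hμ.le) hG)
      calc |f (x q) - f (x p)| * |g (x r) - g (x q)|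
          ≤ (F * w ^ θ) * (G * w ^ μ) := mul_le_mul a1 a2 (abs_nonneg _) (by positivity)
        _ = F * G * (w ^ θ * w ^ μ) := by ring
    have i1 := (ih i m him (by omega)).trans
      (half _ (sub_nonneg.2 (hx him)) hleft)
    have i2 := (ih (m + 1) j hmj (by omega)).trans
      (half _ (sub_nonneg.2 (hx hmj)) hright)
    have c1 := cross i m j le_rfl him (by omega) le_rfl
    have c2 := cross m (m + 1) j him (Nat.le_succ m) hmj le_rfl
    rw [youngDefect_split f g x him (by omega : m ≤ j),
      youngDefect_split f g x (Nat.le_succ m) hmj, Nat.succ_eq_add_one, youngDefect_succ]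
    have hP : 0 ≤ F * G * w ^ (θ + μ) := by positivity
    have key := mul_le_mul_of_nonneg_right hCle hP
    rw [abs_le] at *
    constructor <;> nlinarith

/-- The error made by replacing a grid point by its projection to `[a, b]`. If the increment of
`g` is nonzero then the projection moves `t` by at most the step `u - t`. -/
lemma abs_clamp_error_le {T θ μ F G a b t u : ℝ} {f g : ℝ → ℝ} (hθ : 0 < θ) (hμ : 0 < μ)
    (hF : 0 ≤ F) (hG : 0 ≤ G)
    (hf : ∀ s t, 0 ≤ s → s ≤ t → t ≤ T → |f t - f s| ≤ F * (t - s) ^ θ)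
    (hg : ∀ s t, 0 ≤ s → s ≤ t → t ≤ T → |g t - g s| ≤ G * (t - s) ^ μ)
    (hab : a < b) (hb : b ≤ T) (ht : 0 ≤ t) (htu : t ≤ u) :
    |(f t - f (min (max t a) b)) * (g (min (max u a) b) - g (min (max t a) b))|
      ≤ F * (u - t) ^ θ * (G * (u - t) ^ μ) := by
  have hd : 0 ≤ u - t := sub_nonneg.2 htu
  have hR : 0 ≤ F * (u - t) ^ θ * (G * (u - t) ^ μ) := by positivity
  rcases le_total u a with hua | hua
  · rw [max_eq_right hua, max_eq_right (htu.trans hua)]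
    simpa using hR
  rcases le_total b t with hbt | hbt
  · rw [min_eq_right (hbt.trans (le_max_left t a)),
      min_eq_right ((hbt.trans htu).trans (le_max_left u a))]
    simpa using hR
  have e1 : min (max t a) b = max t a := min_eq_left (max_le hbt hab.le)
  rw [e1, max_eq_left hua, abs_mul]
  have m1 : t ≤ max t a := le_max_left _ _
  have m2 : max t a ≤ u := max_le htu hua
  have m3 : max t a ≤ b := max_le hbt hab.le
  have m4 : max t a ≤ min u b := le_min m2 m3
  have m5 : min u b ≤ u := min_le_left _ _
  have a1 : |f t - f (max t a)| ≤ F * (u - t) ^ θ := by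
    rw [abs_sub_comm]
    exact (hf _ _ ht m1 (m3.trans hb)).trans (mul_le_mul_of_nonneg_left
      (Real.rpow_le_rpow (by linarith) (by linarith) hθ.le) hF)
  have a2 : |g (min u b) - g (max t a)| ≤ G * (u - t) ^ μ :=
    (hg _ _ (ht.trans m1) m4 ((min_le_right _ _).trans hb)).trans (mul_le_mul_of_nonneg_left
      (Real.rpow_le_rpow (by linarith) (by linarith) hμ.le) hG)
  exact mul_le_mul a1 a2 (abs_nonneg _) (by positivity)

lemma holderNorm_nonneg (T θ : ℝ) (f : ℝ → ℝ) : 0 ≤ holderNorm T θ f := by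
  apply Real.sSup_nonneg
  rintro r ⟨s, t, -, hst, -, rfl⟩
  have := Real.rpow_nonneg (sub_nonneg.2 hst.le) θ
  positivity

lemma abs_sub_le_holderNorm {T θ : ℝ} {f : ℝ → ℝ} (hf : BddAbove (holderSet T θ f)) (s t : ℝ)
    (hs : 0 ≤ s) (hst : s ≤ t) (ht : t ≤ T) :
    |f t - f s| ≤ holderNorm T θ f * (t - s) ^ θ := by
  rcases hst.eq_or_lt with rfl | hlt
  · have := holderNorm_nonneg T θ f
    have := Real.rpow_nonneg (sub_nonneg.2 (le_refl s)) θ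
    rw [sub_self, abs_zero]
    positivity
  · rw [← div_le_iff₀ (Real.rpow_pos_of_pos (sub_pos.2 hlt) θ)]
    exact le_csSup hf ⟨s, t, hs, hlt, ht, rfl⟩

/-- Young–Loève estimate: there is a constant `c > 0` depending only on
`θ` and `μ` such that any limit `L` of the Riemann sums satisfies
`|L - f(a)(g(b) - g(a))| ≤ c ‖f‖_θ ‖g‖_μ (b-a)^{θ+μ}`. -/
theorem young_loeve_estimate
    (θ μ : ℝ) (hθ : θ ∈ Set.Ioo (0 : ℝ) 1) (hμ : μ ∈ Set.Ioo (0 : ℝ) 1) (hθμ : 1 < θ + μ) :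
    ∃ c : ℝ, 0 < c ∧
      ∀ T : ℝ, 0 < T → ∀ f g : ℝ → ℝ,
        BddAbove (holderSet T θ f) → BddAbove (holderSet T μ g) →
        ∀ a b : ℝ, 0 ≤ a → a < b → b ≤ T → ∀ L : ℝ,
          Tendsto (fun n : ℕ => riemannSum T a b f g n) atTop (nhds L) →
          |L - f a * (g b - g a)| ≤
            c * holderNorm T θ f * holderNorm T μ g * (b - a) ^ (θ + μ) := by
  obtain ⟨hθ0, -⟩ := hθ
  obtain ⟨hμ0, -⟩ := hμ
  set p := θ + μ with hp
  have hq : (1 / 2 : ℝ) ^ (p - 1) < 1 :=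
    Real.rpow_lt_one (by norm_num) (by norm_num) (by linarith)
  have hq2 : (1 / 2 : ℝ) ^ (p - 1) = 2 * (1 / 2) ^ p := by
    rw [Real.rpow_sub_one (by norm_num)]
    ring
  rw [hq2] at hq
  -- The fixed point of `C ↦ 2 * C * (1 / 2) ^ p + 2`.
  have hC : 0 < 2 / (1 - 2 * (1 / 2 : ℝ) ^ p) := div_pos two_pos (by linarith)
  have hCle : 2 * (2 / (1 - 2 * (1 / 2 : ℝ) ^ p)) * (1 / 2) ^ p + 2
      ≤ 2 / (1 - 2 * (1 / 2 : ℝ) ^ p) := by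
    have h : 2 / (1 - 2 * (1 / 2 : ℝ) ^ p) * (1 - 2 * (1 / 2 : ℝ) ^ p) = 2 :=
      div_mul_cancel₀ _ (by linarith)
    linarith
  generalize 2 / (1 - 2 * (1 / 2 : ℝ) ^ p) = C at hC hCle
  refine ⟨C, hC, ?_⟩
  intro T hT f g hfB hgB a b ha hab hb L hL
  have hF := holderNorm_nonneg T θ f
  have hG := holderNorm_nonneg T μ g
  have hf := abs_sub_le_holderNorm hfB
  have hg := abs_sub_le_holderNorm hgB
  generalize holderNorm T θ f = F at *
  generalize holderNorm T μ g = G at *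
  have hlim : Tendsto (fun n : ℕ => C * F * G * (b - a) ^ p
      + F * G * T ^ p * (n : ℝ) ^ (-(p - 1))) atTop (nhds (C * F * G * (b - a) ^ p)) := by
    have h := ((tendsto_rpow_neg_atTop (by linarith : 0 < p - 1)).comp
      tendsto_natCast_atTop_atTop).const_mul (F * G * T ^ p)
    simpa using h.const_add (C * F * G * (b - a) ^ p)
  refine le_of_tendsto_of_tendsto (hL.sub_const (f a * (g b - g a))).abs hlim ?_
  filter_upwards [eventually_ge_atTop 1] with n hn
  have hn0 : (0 : ℝ) < n := by exact_mod_cast hn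
  -- The grid projected to `[a, b]`; it runs from `a` at `k = 0` to `b` at `k = n`.
  set x : ℕ → ℝ := fun k => min (max (k * T / n) a) b with hxdef
  have hxmono : Monotone x := by
    intro k l hkl
    have : (k : ℝ) ≤ l := by exact_mod_cast hkl
    simp only [hxdef]
    gcongr
  have hx0 : ∀ k, 0 ≤ x k := fun k =>
    le_min (ha.trans (le_max_right _ _)) (ha.trans hab.le)
  have hxT : ∀ k, x k ≤ T := fun k => (min_le_right _ _).trans hb
  have hxa : x 0 = a := by
    simp [hxdef, max_eq_right ha, min_eq_left hab.le]
  have hxb : x n = b := by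
    have : (n : ℝ) * T / n = T := by field_simp
    simp only [hxdef, this]
    exact min_eq_right (hb.trans (le_max_left _ _))
  have hmain := abs_youngDefect_le hθ0 hμ0 hF hG hC.le hf hg hCle hxmono hx0 hxT n 0 n
    (Nat.zero_le n) (by omega)
  rw [hxa, hxb] at hmain
  have hdecomp : riemannSum T a b f g n - f a * (g b - g a) = youngDefect f g x 0 n
      + ∑ k ∈ Finset.range n, (f (k * T / n) - f (x k)) * (g (x (k + 1)) - g (x k)) := by
    simp only [youngDefect, riemannSum, hxa, hxb, Nat.Ico_zero_eq_range, sub_mul,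
      Finset.sum_sub_distrib]
    simp only [hxdef, Nat.cast_add, Nat.cast_one]
    ring
  have herr : |∑ k ∈ Finset.range n, (f (k * T / n) - f (x k)) * (g (x (k + 1)) - g (x k))|
      ≤ F * G * T ^ p * (n : ℝ) ^ (-(p - 1)) := by
    refine (Finset.abs_sum_le_sum_abs _ _).trans ?_
    have hterm : ∀ k ∈ Finset.range n,
        |(f (k * T / n) - f (x k)) * (g (x (k + 1)) - g (x k))|
          ≤ F * (T / n) ^ θ * (G * (T / n) ^ μ) := by
      intro k _
      have hstep : ((k + 1 : ℕ) : ℝ) * T / n - k * T / n = T / n := by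
        push_cast
        ring
      have h := abs_clamp_error_le (t := k * T / n) (u := ((k + 1 : ℕ) : ℝ) * T / n)
        hθ0 hμ0 hF hG hf hg hab hb (by positivity)
        (sub_nonneg.1 (by rw [hstep]; positivity))
      rwa [hstep] at h
    refine (Finset.sum_le_card_nsmul _ _ _ hterm).trans (le_of_eq ?_)
    have h1 : F * (T / n) ^ θ * (G * (T / n) ^ μ) = F * G * (T / n) ^ p := by
      rw [hp, Real.rpow_add (by positivity)]
      ring
    rw [h1, Finset.card_range, nsmul_eq_mul, Real.div_rpow hT.le hn0.le, neg_sub,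
      Real.rpow_sub hn0, Real.rpow_one]
    ring
  rw [hdecomp]
  refine (abs_add_le _ _).trans (add_le_add (hmain.trans_eq ?_) herr)
  ring
end

section
/- (Garsia–Rodemich–Rumsey) Let T > 0 and let f : [0,T] → ℝ be continuous. For all α, p > 0 with pα > 1 there exists a constant C > 0, depending only on α and p, such that for all s, t ∈ [0,T]: |f(t) − f(s)|^p ≤ C · |t − s|^{pα − 1} · ∫_0^T ∫_0^T |f(x) − f(y)|^p / |x − y|^{pα + 1} dx dy (the inequality being trivially true when the double integral is infinite). -/
open MeasureTheory

/-!
The proof is a dyadic chaining argument. Let `k (x, y) = |f x - f y|^p / |x - y|^(pα+1)`, let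
`G x = ∫ k (x, y) dy` be its partial integral over `[a, b]`, and let `M > 0` bound the integral of
`G`. By averaging, a set `J` of length `ℓ` contains a point at which two prescribed functions are
simultaneously at most `2 / ℓ` times their integrals (`exists_mem_le_two_mul_div`). Starting from a
point `x₀` of `[a, b]` where `G` is controlled, this gives points `xₙ`, within `ℓₙ = (b - a) / 2^n`
of a given endpoint, with `G xₙ ≤ 2 M / ℓₙ` and `k (xₙ, xₙ₊₁) ≤ 8 M / ℓₙ²`. Hence
`|f xₙ - f xₙ₊₁|^p` is at most a constant times `M ℓₙ^(pα-1)`, and since `pα > 1` the increments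
decay geometrically. Summing them, continuity bounds `|f x₀ - f e|` for both endpoints `e`, with
the same `x₀`.
-/

/-- The Gagliardo-type kernel `|f x - f y|^p / |x - y|^(pα+1)`; it vanishes on the diagonal when
`p ≠ 0`. -/
noncomputable def grrKernel (α p : ℝ) (f : ℝ → ℝ) (x y : ℝ) : ENNReal :=
  ENNReal.ofReal (|f x - f y| ^ p / |x - y| ^ (p * α + 1))

lemma measurable_grrKernel (α p : ℝ) {f : ℝ → ℝ} (hf : Measurable f) :
    Measurable (Function.uncurry (grrKernel α p f)) := by
  unfold grrKernel Function.uncurry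
  fun_prop

/-- Simultaneous Chebyshev selection, obtained by averaging `g / A + h / B`. -/
lemma exists_mem_le_two_mul_div {J : Set ℝ} {l A B : ℝ}
    (hl : 0 < l) (hv : volume J = ENNReal.ofReal l) {g h : ℝ → ENNReal} (hg : Measurable g)
    (hh : Measurable h) (hA : 0 < A) (hB : 0 < B)
    (hgA : ∫⁻ x in J, g x ≤ ENNReal.ofReal A) (hhB : ∫⁻ x in J, h x ≤ ENNReal.ofReal B) :
    ∃ x ∈ J, g x ≤ ENNReal.ofReal (2 * A / l) ∧ h x ≤ ENNReal.ofReal (2 * B / l) := by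
  have hA' : ENNReal.ofReal A ≠ 0 := by simpa using hA
  have hB' : ENNReal.ofReal B ≠ 0 := by simpa using hB
  have hl' : ENNReal.ofReal l ≠ 0 := by simpa using hl
  have hm : Measurable fun x => g x / ENNReal.ofReal A + h x / ENNReal.ofReal B := by fun_prop
  obtain ⟨x, hx, hle⟩ := exists_le_setLAverage (μ := volume) (s := J)
    (by rw [hv]; exact hl') (by rw [hv]; exact ENNReal.ofReal_ne_top) hm.aemeasurable
  have hint : ∫⁻ x in J, (g x / ENNReal.ofReal A + h x / ENNReal.ofReal B) ≤ 2 := by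
    rw [lintegral_add_left (by fun_prop)]
    simp only [div_eq_mul_inv]
    rw [lintegral_mul_const _ hg, lintegral_mul_const _ hh, ← div_eq_mul_inv, ← div_eq_mul_inv,
      ← one_add_one_eq_two]
    exact add_le_add (ENNReal.div_le_of_le_mul (by simpa using hgA))
      (ENNReal.div_le_of_le_mul (by simpa using hhB))
  rw [setLAverage_eq, hv] at hle
  have hle' := hle.trans (ENNReal.div_le_div_right hint _)
  have key : ∀ {u : ENNReal} {D : ℝ}, 0 < D →
      u / ENNReal.ofReal D ≤ 2 / ENNReal.ofReal l → u ≤ ENNReal.ofReal (2 * D / l) := by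
    intro u D hD hu
    rw [ENNReal.div_le_iff (by simpa using hD) ENNReal.ofReal_ne_top] at hu
    refine hu.trans (le_of_eq ?_)
    rw [show (2 : ENNReal) = ENNReal.ofReal 2 by simp, ← ENNReal.ofReal_div_of_pos hl,
      ← ENNReal.ofReal_mul (by positivity)]
    congr 1
    ring
  exact ⟨x, hx, key hA (le_self_add.trans hle'), key hB (le_add_self.trans hle')⟩

/-- The increment bound entering the chain: `x` is a point selected at scale `l` and `y` the next
one, selected at scale `l / 2`, which accounts for the denominators in the kernel bound. -/
lemma increment_le {α p M l : ℝ} (hp : 0 < p) (hq : 0 < p * α + 1) (hM : 0 < M) (hl : 0 < l)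
    {f : ℝ → ℝ} {x y : ℝ} (hxy : |x - y| ≤ 2 * l)
    (hk : grrKernel α p f x y ≤ ENNReal.ofReal (2 * (2 * M / l) / (l / 2))) :
    |f x - f y| ^ p ≤ 2 ^ (p * α + 4) * M * l ^ (p * α - 1) := by
  have hk' : |f x - f y| ^ p / |x - y| ^ (p * α + 1) ≤ 2 * (2 * M / l) / (l / 2) :=
    (ENNReal.ofReal_le_ofReal_iff (by positivity)).1 hk
  rcases eq_or_ne x y with rfl | hne
  · rw [sub_self, abs_zero, Real.zero_rpow hp.ne']
    positivity
  have hpos : 0 < |x - y| := abs_pos.2 (sub_ne_zero.2 hne)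
  rw [div_le_iff₀ (by positivity)] at hk'
  calc |f x - f y| ^ p ≤ 2 * (2 * M / l) / (l / 2) * |x - y| ^ (p * α + 1) := hk'
    _ ≤ 2 * (2 * M / l) / (l / 2) * (2 * l) ^ (p * α + 1) := by gcongr
    _ = 2 ^ (p * α + 4) * M * l ^ (p * α - 1) := by
      rw [Real.mul_rpow (by norm_num) hl.le,
        show p * α + 4 = p * α + 1 + 3 by ring, Real.rpow_add (by norm_num) (p * α + 1) 3,
        show p * α + 1 = (p * α - 1) + 2 by ring, Real.rpow_add hl (p * α - 1) 2]
      norm_num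
      field_simp
      norm_num

/-- The chaining step towards a single point `e`, along sets `J n` of length `d / 2 ^ n` shrinking
to `e`. -/
lemma chain_le {α p M a b d : ℝ} (hp : 0 < p) (hpα : 1 < p * α) (hM : 0 < M) (hd : 0 < d)
    {f : ℝ → ℝ} (hf : Continuous f)
    (hI : ∫⁻ x in Set.Icc a b, ∫⁻ y in Set.Icc a b, grrKernel α p f x y ≤ ENNReal.ofReal M)
    {e : ℝ} {J : ℕ → Set ℝ} (hJsub : ∀ n, J n ⊆ Set.Icc a b)
    (hJv : ∀ n, volume (J n) = ENNReal.ofReal (d / 2 ^ n))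
    (hJe : ∀ n, ∀ x ∈ J n, |x - e| ≤ d / 2 ^ n) {x₀ : ℝ} (hx₀ : x₀ ∈ J 0)
    (hG : ∫⁻ y in Set.Icc a b, grrKernel α p f x₀ y ≤ ENNReal.ofReal (2 * M / d)) :
    |f x₀ - f e| ≤ (2 ^ (p * α + 4) * M * d ^ (p * α - 1)) ^ (1 / p) /
      (1 - 2 ^ (-(p * α - 1) / p) : ℝ) := by
  have hk := measurable_grrKernel α p hf.measurable
  set G : ℝ → ENNReal := fun x => ∫⁻ y in Set.Icc a b, grrKernel α p f x y with hGdef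
  have hGm : Measurable G := hk.lintegral_prod_right'
  have hlpos : ∀ n : ℕ, 0 < d / 2 ^ n := fun n => by positivity
  let P : ℕ → ℝ → Prop := fun n x => x ∈ J n ∧ G x ≤ ENNReal.ofReal (2 * M / (d / 2 ^ n))
  have step : ∀ n x, P n x → ∃ y, P (n + 1) y ∧
      grrKernel α p f x y ≤
        ENNReal.ofReal (2 * (2 * M / (d / 2 ^ n)) / (d / 2 ^ n / 2)) := by
    rintro n x ⟨-, hx2⟩
    obtain ⟨y, hy, h1, h2⟩ := exists_mem_le_two_mul_div (hlpos (n + 1)) (hJv (n + 1)) hGm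
      (hk.of_uncurry_left (x := x)) hM
      (show 0 < 2 * M / (d / 2 ^ n) by have := hlpos n; positivity)
      ((lintegral_mono_set (hJsub _)).trans hI) ((lintegral_mono_set (hJsub _)).trans hx2)
    refine ⟨y, ⟨hy, h1⟩, ?_⟩
    rwa [show d / 2 ^ n / 2 = d / 2 ^ (n + 1) by rw [pow_succ]; field_simp]
  choose! nxt hnxt using step
  obtain ⟨u, hu0, hus⟩ : ∃ u : ℕ → ℝ, u 0 = x₀ ∧ ∀ n, u (n + 1) = nxt n (u n) :=
    ⟨fun n => Nat.rec x₀ (fun n x => nxt n x) n, rfl, fun _ => rfl⟩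
  have hu : ∀ n, P n (u n) := by
    intro n
    induction n with
    | zero => rw [hu0]; exact ⟨hx₀, by simpa using hG⟩
    | succ n ih => rw [hus]; exact (hnxt n _ ih).1
  have hue : ∀ n, |u n - e| ≤ d / 2 ^ n := fun n => hJe n _ (hu n).1
  have htend : Filter.Tendsto u Filter.atTop (nhds e) := by
    rw [tendsto_iff_dist_tendsto_zero]
    refine squeeze_zero (fun _ => dist_nonneg) hue ?_
    have := (tendsto_pow_atTop_nhds_zero_of_lt_one (r := (1 / 2 : ℝ)) (by norm_num)
      (by norm_num)).const_mul d
    simpa [div_eq_mul_inv] using this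
  have hr : (2 : ℝ) ^ (-(p * α - 1) / p) < 1 := by
    apply Real.rpow_lt_one_of_one_lt_of_neg (by norm_num)
    apply div_neg_of_neg_of_pos _ hp
    linarith
  have hinc : ∀ n, dist (f (u n)) (f (u (n + 1))) ≤
      (2 ^ (p * α + 4) * M * d ^ (p * α - 1)) ^ (1 / p) * ((2 : ℝ) ^ (-(p * α - 1) / p)) ^ n := by
    intro n
    have hxy : |u n - u (n + 1)| ≤ 2 * (d / 2 ^ n) := by
      have h1 := hue n
      have h2 := hue (n + 1)
      have h3 : d / 2 ^ (n + 1) ≤ d / 2 ^ n := by gcongr <;> norm_num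
      have h4 := abs_sub_le (u n) e (u (n + 1))
      rw [abs_sub_comm e] at h4
      linarith
    have h := increment_le hp (show 0 < p * α + 1 by linarith) hM (hlpos n) hxy
      (by rw [hus]; exact (hnxt n _ (hu n)).2)
    rw [Real.dist_eq, ← Real.rpow_le_rpow_iff (abs_nonneg _) (by positivity) hp]
    refine h.trans (le_of_eq ?_)
    have hpow : ((2 ^ (-(p * α - 1) / p) : ℝ) ^ n) ^ p = ((2 ^ n : ℝ) ^ (p * α - 1))⁻¹ := by
      rw [← Real.rpow_natCast, ← Real.rpow_natCast, ← Real.rpow_mul (by positivity),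
        ← Real.rpow_mul (by positivity), ← Real.rpow_mul (by positivity),
        ← Real.rpow_neg (by positivity)]
      congr 1
      field_simp
    rw [Real.mul_rpow (by positivity) (by positivity), ← Real.rpow_mul (by positivity),
      one_div_mul_cancel hp.ne', Real.rpow_one, Real.div_rpow hd.le (by positivity), hpow]
    ring
  have h := dist_le_of_le_geometric_of_tendsto₀ _ _ hr hinc ((hf.tendsto e).comp htend)
  rwa [hu0] at h

/-- The estimate between the endpoints of an interval, for a globally continuous function. -/
lemma abs_sub_rpow_le {α p M a b : ℝ} (hp : 0 < p) (hpα : 1 < p * α) (hM : 0 < M) (hab : a < b)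
    {f : ℝ → ℝ} (hf : Continuous f)
    (hI : ∫⁻ x in Set.Icc a b, ∫⁻ y in Set.Icc a b, grrKernel α p f x y ≤ ENNReal.ofReal M) :
    |f b - f a| ^ p ≤ (2 / (1 - 2 ^ (-(p * α - 1) / p) : ℝ)) ^ p * 2 ^ (p * α + 4) *
      (b - a) ^ (p * α - 1) * M := by
  have hd : 0 < b - a := sub_pos.2 hab
  have hGm : Measurable fun x => ∫⁻ y in Set.Icc a b, grrKernel α p f x y :=
    (measurable_grrKernel α p hf.measurable).lintegral_prod_right'
  obtain ⟨x₀, hx₀, hG, -⟩ := exists_mem_le_two_mul_div hd Real.volume_Icc hGm hGm hM hM hI hI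
  have hle : ∀ n : ℕ, (b - a) / 2 ^ n ≤ b - a := fun n =>
    div_le_self hd.le (one_le_pow₀ (by norm_num))
  have hpos : ∀ n : ℕ, 0 < (b - a) / 2 ^ n := fun n => by positivity
  have ha := chain_le hp hpα hM hd hf hI (e := a)
    (J := fun n => Set.Icc a (a + (b - a) / 2 ^ n))
    (fun n => Set.Icc_subset_Icc_right (by linarith [hle n]))
    (fun n => by rw [Real.volume_Icc]; congr 1; ring)
    (fun n x hx => by rw [abs_of_nonneg] <;> linarith [hx.1, hx.2])
    (by simpa using hx₀) hG
  have hb := chain_le hp hpα hM hd hf hI (e := b)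
    (J := fun n => Set.Icc (b - (b - a) / 2 ^ n) b)
    (fun n => Set.Icc_subset_Icc_left (by linarith [hle n]))
    (fun n => by rw [Real.volume_Icc]; congr 1; ring)
    (fun n x hx => by rw [abs_of_nonpos] <;> linarith [hx.1, hx.2])
    (by simpa using hx₀) hG
  have hr : (2 : ℝ) ^ (-(p * α - 1) / p) < 1 := by
    apply Real.rpow_lt_one_of_one_lt_of_neg (by norm_num)
    apply div_neg_of_neg_of_pos _ hp
    linarith
  have hr' : 0 < 1 - (2 : ℝ) ^ (-(p * α - 1) / p) := sub_pos.2 hr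
  set r := (2 : ℝ) ^ (-(p * α - 1) / p)
  set A := 2 ^ (p * α + 4) * M * (b - a) ^ (p * α - 1) with hA
  have hA0 : 0 ≤ A := by positivity
  have h : |f b - f a| ≤ 2 / (1 - r) * A ^ (1 / p) := by
    have h4 := abs_sub_le (f b) (f x₀) (f a)
    rw [abs_sub_comm (f b) (f x₀)] at h4
    calc |f b - f a| ≤ A ^ (1 / p) / (1 - r) + A ^ (1 / p) / (1 - r) := by linarith
      _ = _ := by ring
  calc |f b - f a| ^ p ≤ (2 / (1 - r) * A ^ (1 / p)) ^ p := by gcongr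
    _ = (2 / (1 - r)) ^ p * A := by
      rw [Real.mul_rpow (by positivity) (by positivity), ← Real.rpow_mul hA0,
        one_div_mul_cancel hp.ne', Real.rpow_one]
    _ = _ := by rw [hA]; ring

/-- The `[0, ∞]`-valued form of the estimate, for ordered points of `[0, T]` and a function
continuous only on `[0, T]`. -/
lemma ofReal_abs_sub_rpow_le {α p T a b : ℝ} (hp : 0 < p) (hpα : 1 < p * α) (hT : 0 ≤ T)
    {f : ℝ → ℝ} (hf : ContinuousOn f (Set.Icc 0 T)) (ha : 0 ≤ a) (hab : a < b) (hb : b ≤ T) :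
    ENNReal.ofReal (|f b - f a| ^ p) ≤
      ENNReal.ofReal ((2 / (1 - 2 ^ (-(p * α - 1) / p) : ℝ)) ^ p * 2 ^ (p * α + 4) *
        (b - a) ^ (p * α - 1)) *
      ∫⁻ x in Set.Icc (0 : ℝ) T, ∫⁻ y in Set.Icc (0 : ℝ) T, grrKernel α p f x y := by
  have hd : 0 < b - a := sub_pos.2 hab
  have hr : (2 : ℝ) ^ (-(p * α - 1) / p) < 1 := by
    apply Real.rpow_lt_one_of_one_lt_of_neg (by norm_num)
    apply div_neg_of_neg_of_pos _ hp
    linarith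
  have hr' : 0 < 1 - (2 : ℝ) ^ (-(p * α - 1) / p) := sub_pos.2 hr
  set K := (2 / (1 - 2 ^ (-(p * α - 1) / p) : ℝ)) ^ p * 2 ^ (p * α + 4) *
        (b - a) ^ (p * α - 1) with hK
  have hKpos : 0 < K := by positivity
  have hK0 : ENNReal.ofReal K ≠ 0 := by simpa using hKpos
  set I := ∫⁻ x in Set.Icc (0 : ℝ) T, ∫⁻ y in Set.Icc (0 : ℝ) T, grrKernel α p f x y with hIdef
  -- `g` extends `f` from `[0, T]` to a continuous function on `ℝ`.
  let g : ℝ → ℝ := Set.IccExtend hT ((Set.Icc 0 T).domRestrict f)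
  have hg : Continuous g := (continuousOn_iff_continuous_domRestrict.1 hf).Icc_extend'
  have hgf : ∀ x ∈ Set.Icc 0 T, g x = f x := fun x hx => Set.IccExtend_of_mem hT _ hx
  have hsub : Set.Icc a b ⊆ Set.Icc 0 T := Set.Icc_subset_Icc ha hb
  have hgI : ∫⁻ x in Set.Icc a b, ∫⁻ y in Set.Icc a b, grrKernel α p g x y ≤ I := by
    calc ∫⁻ x in Set.Icc a b, ∫⁻ y in Set.Icc a b, grrKernel α p g x y
        = ∫⁻ x in Set.Icc a b, ∫⁻ y in Set.Icc a b, grrKernel α p f x y := by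
          refine setLIntegral_congr_fun measurableSet_Icc fun x hx => ?_
          refine setLIntegral_congr_fun measurableSet_Icc fun y hy => ?_
          simp only [grrKernel, hgf x (hsub hx), hgf y (hsub hy)]
      _ ≤ ∫⁻ x in Set.Icc a b, ∫⁻ y in Set.Icc 0 T, grrKernel α p f x y :=
          lintegral_mono fun x => lintegral_mono_set hsub
      _ ≤ I := lintegral_mono_set hsub
  rcases eq_or_ne I ⊤ with hI | hI
  · rw [hI, ENNReal.mul_top hK0]
    exact le_top
  -- The integral may vanish, so the estimate is applied with every `M > I`.
  have main : ∀ M : ℝ, I.toReal < M → |f b - f a| ^ p ≤ K * M := by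
    intro M hIM
    have hM : 0 < M := ENNReal.toReal_nonneg.trans_lt hIM
    have h := abs_sub_rpow_le hp hpα hM hab hg
      (hgI.trans ((ENNReal.le_ofReal_iff_toReal_le hI hM.le).2 hIM.le))
    rwa [hgf b ⟨by linarith, hb⟩, hgf a ⟨ha, by linarith⟩] at h
  have hfin : |f b - f a| ^ p ≤ K * I.toReal := by
    rw [← div_le_iff₀' hKpos]
    exact le_of_forall_gt_imp_ge_of_dense fun M hM => (div_le_iff₀' hKpos).2 (main M hM)
  rw [← ENNReal.ofReal_toReal hI, ← ENNReal.ofReal_mul hKpos.le]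
  exact ENNReal.ofReal_le_ofReal hfin

/-- Garsia–Rodemich–Rumsey: for all `α, p > 0` with `pα > 1` there is a
constant `C > 0`, depending only on `α` and `p`, such that for every `T > 0`, every
continuous `f : [0,T] → ℝ` and all `s, t ∈ [0,T]`:
`|f t - f s|^p ≤ C |t-s|^{pα-1} ∫_0^T ∫_0^T |f x - f y|^p / |x-y|^{pα+1} dx dy`,
the double integral being a Lebesgue integral with values in `[0,∞]`. -/
theorem garsia_rodemich_rumsey
    (α p : ℝ) (hα : 0 < α) (hp : 0 < p) (hpα : 1 < p * α) :
    ∃ C : ℝ, 0 < C ∧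
      ∀ T : ℝ, 0 < T → ∀ f : ℝ → ℝ, ContinuousOn f (Set.Icc 0 T) →
        ∀ s ∈ Set.Icc (0 : ℝ) T, ∀ t ∈ Set.Icc (0 : ℝ) T,
          ENNReal.ofReal (|f t - f s| ^ p) ≤
            ENNReal.ofReal (C * |t - s| ^ (p * α - 1)) *
              ∫⁻ x in Set.Icc (0 : ℝ) T, ∫⁻ y in Set.Icc (0 : ℝ) T,
                ENNReal.ofReal (|f x - f y| ^ p / |x - y| ^ (p * α + 1)) := by
  have hr : (2 : ℝ) ^ (-(p * α - 1) / p) < 1 := by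
    apply Real.rpow_lt_one_of_one_lt_of_neg (by norm_num)
    apply div_neg_of_neg_of_pos _ hp
    linarith
  have hr' : 0 < 1 - (2 : ℝ) ^ (-(p * α - 1) / p) := sub_pos.2 hr
  refine ⟨(2 / (1 - 2 ^ (-(p * α - 1) / p) : ℝ)) ^ p * 2 ^ (p * α + 4), by positivity, ?_⟩
  intro T hT f hf s hs t ht
  rcases lt_trichotomy s t with h | rfl | h
  · rw [abs_of_pos (sub_pos.2 h)]
    exact ofReal_abs_sub_rpow_le hp hpα hT.le hf hs.1 h ht.2
  · rw [sub_self, abs_zero, Real.zero_rpow hp.ne', ENNReal.ofReal_zero]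
    exact zero_le
  · rw [abs_sub_comm (f t), abs_sub_comm t, abs_of_pos (sub_pos.2 h)]
    exact ofReal_abs_sub_rpow_le hp hpα hT.le hf ht.1 h hs.2
end

section
/- Let H ∈ (1/2, 1) and T > 0. There exists a constant K > 0, depending only on H and T, such that for all s, t, x, y ∈ [0,T] with s ≤ t and x ≤ y: (t − s)·(y − x) ≤ K · r_H(s, t, x, y). -/
/-!
The quadratic kernel `u ↦ u ^ 2` in place of `u ↦ |u| ^ (2 * H)` would make the covariance exactly
`(t - s) * (y - x)`. It therefore suffices to find `c > 0` such that
`φ u = |u| ^ (2 * H) - c * u ^ 2` is convex on `[-T, T]` (`convexOn_abs_rpow_sub`): the points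
`s - y ≤ s - x, t - y ≤ t - x` satisfy `(s - x) + (t - y) = (s - y) + (t - x)`, so convexity gives
`φ (s - x) + φ (t - y) ≤ φ (s - y) + φ (t - x)` (`ConvexOn.add_le_add_of_add_eq`), which is
`c * ((t - s) * (y - x)) ≤ r_H(s, t, x, y)`; take `K = 1 / c`.

With `p = 2 * H ∈ (1, 2)`, the choice `c = p * (p - 1) * T ^ (p - 2) / 2` makes the second
derivative of `u ^ p - c * u ^ 2` nonnegative on `(0, T)`, because `u ^ (p - 2)` is decreasing.
This function is also increasing on `[0, T]`, so its composition with `|·|` is convex.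
-/

/-- A convex function has a larger sum at the outer two of four points `a ≤ b, c ≤ d` than at the
inner two, when the two pairs have the same midpoint. -/
lemma ConvexOn.add_le_add_of_add_eq {S : Set ℝ} {f : ℝ → ℝ} (hf : ConvexOn ℝ S f)
    {a b c d : ℝ} (ha : a ∈ S) (hd : d ∈ S) (hab : a ≤ b) (hac : a ≤ c) (h : b + c = a + d) :
    f b + f c ≤ f a + f d := by
  obtain rfl | hlt := (show a ≤ d by linarith).eq_or_lt
  · have hb : b = a := by linarith
    have hc : c = a := by linarith
    rw [hb, hc]
  · have hpos : 0 < d - a := sub_pos.2 hlt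
    set l := (b - a) / (d - a) with hl
    have hl0 : 0 ≤ l := div_nonneg (by linarith) hpos.le
    have hl1 : l ≤ 1 := by rw [hl, div_le_one hpos]; linarith
    have hlm : l * (d - a) = b - a := div_mul_cancel₀ _ hpos.ne'
    have h1 := hf.2 ha hd (sub_nonneg.2 hl1) hl0 (by ring)
    have h2 := hf.2 ha hd hl0 (sub_nonneg.2 hl1) (by ring)
    simp only [smul_eq_mul] at h1 h2
    rw [show (1 - l) * a + l * d = b by linarith] at h1
    rw [show l * a + (1 - l) * d = c by linarith] at h2
    linarith

lemma hasDerivAt_rpow_sub {p c u : ℝ} (hu : 0 < u) :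
    HasDerivAt (fun u : ℝ => u ^ p - c * u ^ 2) (p * u ^ (p - 1) - 2 * c * u) u := by
  refine ((Real.hasDerivAt_rpow_const (Or.inl hu.ne')).sub
    ((hasDerivAt_pow 2 u).const_mul c)).congr_deriv ?_
  push_cast
  ring

lemma continuous_rpow_sub {p c : ℝ} (hp : 0 ≤ p) :
    Continuous (fun u : ℝ => u ^ p - c * u ^ 2) :=
  (Real.continuous_rpow_const hp).sub (by fun_prop)

lemma monotoneOn_rpow_sub {p T : ℝ} (hp1 : 1 < p) (hp2 : p < 2) :
    MonotoneOn (fun u : ℝ => u ^ p - p * (p - 1) * T ^ (p - 2) / 2 * u ^ 2) (Set.Icc 0 T) := by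
  refine monotoneOn_of_hasDerivWithinAt_nonneg (convex_Icc 0 T)
    (continuous_rpow_sub (by linarith)).continuousOn
    (fun u hu => (hasDerivAt_rpow_sub ?_).hasDerivWithinAt) (fun u hu => ?_)
  · rw [interior_Icc] at hu
    exact hu.1
  · rw [interior_Icc] at hu
    have hT : 0 < T := hu.1.trans hu.2
    have h1 : T ^ (p - 2) ≤ u ^ (p - 2) :=
      Real.rpow_le_rpow_of_nonpos hu.1 hu.2.le (by linarith)
    have h2 : u ^ (p - 1) = u ^ (p - 2) * u := by
      rw [← Real.rpow_add_one hu.1.ne']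
      congr 1
      ring
    have h3 : 0 < T ^ (p - 2) := Real.rpow_pos_of_pos hT _
    have h4 : (p - 1) * T ^ (p - 2) ≤ u ^ (p - 2) := by nlinarith
    have h5 : 0 ≤ p * u * (u ^ (p - 2) - (p - 1) * T ^ (p - 2)) :=
      mul_nonneg (mul_nonneg (by linarith) hu.1.le) (sub_nonneg.2 h4)
    rw [h2]
    linarith

lemma convexOn_rpow_sub {p T : ℝ} (hp1 : 1 < p) (hp2 : p < 2) :
    ConvexOn ℝ (Set.Icc 0 T)
      (fun u : ℝ => u ^ p - p * (p - 1) * T ^ (p - 2) / 2 * u ^ 2) := by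
  refine convexOn_of_hasDerivWithinAt2_nonneg (convex_Icc 0 T)
    (f' := fun u => p * u ^ (p - 1) - 2 * (p * (p - 1) * T ^ (p - 2) / 2) * u)
    (f'' := fun u => p * (p - 1) * u ^ (p - 2) - p * (p - 1) * T ^ (p - 2))
    (continuous_rpow_sub (by linarith)).continuousOn
    (fun u hu => (hasDerivAt_rpow_sub ?_).hasDerivWithinAt)
    (fun u hu => HasDerivAt.hasDerivWithinAt ?_) (fun u hu => ?_)
  all_goals rw [interior_Icc] at hu
  · exact hu.1
  · refine (((Real.hasDerivAt_rpow_const (p := p - 1) (Or.inl hu.1.ne')).const_mul p).sub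
      ((hasDerivAt_id u).const_mul (2 * (p * (p - 1) * T ^ (p - 2) / 2)))).congr_deriv ?_
    rw [show p - 1 - 1 = p - 2 by ring]
    ring
  · have h1 : T ^ (p - 2) ≤ u ^ (p - 2) :=
      Real.rpow_le_rpow_of_nonpos hu.1 hu.2.le (by linarith)
    exact sub_nonneg.2 (mul_le_mul_of_nonneg_left h1 (by nlinarith))

lemma convexOn_abs_rpow_sub {p T : ℝ} (hp1 : 1 < p) (hp2 : p < 2) :
    ConvexOn ℝ (Set.Icc (-T) T)
      (fun u : ℝ => |u| ^ p - p * (p - 1) * T ^ (p - 2) / 2 * u ^ 2) := by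
  have hmaps : ∀ u ∈ Set.Icc (-T) T, |u| ∈ Set.Icc 0 T :=
    fun u hu => ⟨abs_nonneg u, abs_le.2 hu⟩
  have habs : ∀ u : ℝ, |u| ^ p - p * (p - 1) * T ^ (p - 2) / 2 * u ^ 2
      = |u| ^ p - p * (p - 1) * T ^ (p - 2) / 2 * |u| ^ 2 := fun u => by rw [sq_abs]
  refine ⟨convex_Icc _ _, fun u hu v hv a b ha hb hab => ?_⟩
  have hc := (convexOn_rpow_sub (T := T) hp1 hp2)
  have h1 := hc.2 (hmaps u hu) (hmaps v hv) ha hb hab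
  have hle : |a • u + b • v| ≤ a • |u| + b • |v| := by
    simpa [abs_mul, abs_of_nonneg ha, abs_of_nonneg hb] using abs_add_le (a * u) (b * v)
  have h2 := monotoneOn_rpow_sub (T := T) hp1 hp2
    (hmaps _ (convex_Icc _ _ hu hv ha hb hab))
    (hc.1 (hmaps u hu) (hmaps v hv) ha hb hab) hle
  simp only [habs]
  exact h2.trans h1


/-- The covariance `r_H(s,t,x,y) = (1/2)(|t-x|^{2H} + |s-y|^{2H} - |s-x|^{2H} - |t-y|^{2H})`
of increments of a fractional Brownian motion with Hurst index `H`. -/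
noncomputable def rH (H s t x y : ℝ) : ℝ :=
  (|t - x| ^ (2 * H) + |s - y| ^ (2 * H) - |s - x| ^ (2 * H) - |t - y| ^ (2 * H)) / 2

/-- for `H ∈ (1/2, 1)` and `T > 0` there is `K > 0`, depending only on `H`
and `T`, such that `(t-s)(y-x) ≤ K ⬝ r_H(s,t,x,y)` for all `s ≤ t`, `x ≤ y` in `[0,T]`. -/
theorem rH_lower_bound
    (H T : ℝ) (hH : H ∈ Set.Ioo (1 / 2 : ℝ) 1) (hT : 0 < T) :
    ∃ K : ℝ, 0 < K ∧
      ∀ s ∈ Set.Icc (0 : ℝ) T, ∀ t ∈ Set.Icc (0 : ℝ) T,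
        ∀ x ∈ Set.Icc (0 : ℝ) T, ∀ y ∈ Set.Icc (0 : ℝ) T,
          s ≤ t → x ≤ y → (t - s) * (y - x) ≤ K * rH H s t x y := by
  obtain ⟨hH1, hH2⟩ := hH
  have hc : 0 < 2 * H * (2 * H - 1) * T ^ (2 * H - 2) / 2 := by
    have h1 : 0 < 2 * H - 1 := by linarith
    have h2 : 0 < H := by linarith
    positivity
  refine ⟨1 / (2 * H * (2 * H - 1) * T ^ (2 * H - 2) / 2), one_div_pos.2 hc, ?_⟩
  intro s hs t ht x hx y hy hst hxy
  have h := (convexOn_abs_rpow_sub (p := 2 * H) (T := T) (by linarith)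
    (by linarith)).add_le_add_of_add_eq (a := s - y) (b := s - x) (c := t - y) (d := t - x)
    ⟨by linarith [hs.1, hy.2], by linarith [hs.2, hy.1]⟩
    ⟨by linarith [ht.1, hx.2], by linarith [ht.2, hx.1]⟩
    (by linarith) (by linarith) (by ring)
  rw [one_div_mul_eq_div, le_div_iff₀ hc, rH]
  generalize 2 * H * (2 * H - 1) * T ^ (2 * H - 2) / 2 = c at h ⊢
  linarith
end

section
/- Fix T > 0 and H ∈ (1/2, 1), and let B be a fractional Brownian motion with Hurst index H on [0,T] defined on a probability space (Ω, F, P). Let x : Ω × [0,T] → ℝ be a jointly measurable stochastic process, measurable with respect to the σ-algebra generated by B, with almost surely continuous sample paths, and such that E[ (sup_{s ∈ [0,T]} |x_s|)^{2+δ} ] < ∞ for some δ > 0. Then for every fixed t ∈ [0,T], the weighted quadratic variation S^n_t = n^{2H−1} Σ_{k=0}^{⌊nt⌋} x_{k/n} · ( B_{min((k+1)/n, t)} − B_{k/n} )² converges to ∫_0^t x_s ds in L²(Ω) as n → ∞. -/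
/-!
Write `Z n k = n ^ (2H - 1) (B_{min((k+1)/n, t)} - B_{k/n})²` (`sqInc`) and `μ n k = E[Z n k]`
(`meanInc`), so that `μ n k = 1/n` except on the last, possibly shorter, interval. The weighted sum
splits into its mean part `Σ x_{k/n} μ n k` and its centered part `Σ x_{k/n} (Z n k - μ n k)`.

The mean part is, up to one vanishing term, a Riemann sum of a continuous path
(`tendsto_sum_meanInc`). It converges in `L²` by dominated convergence, the dominating function
being a multiple of `sup |x|` (`tendsto_eLpNorm_mean_part`).

For the centered part the weights are not independent of the increments, so they are first frozen
at a coarse scale `1/m` (`weighted_sum_decomp`). This leaves finitely many products of a frozen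
weight `x_{j/m}` with a sum of the variables `Z n k - μ n k` over a block of indices, and an error
bounded by the modulus of continuity of `x` at scale `1/m` (`gridOsc`) times `Σ (Z n k + μ n k)`
(`totalInc`). Hölder's inequality with the exponents `2 + δ` and `p = 2 (2 + δ) / δ` separates the
factors in both terms (`IsFBM.eLpNorm_error_le`).

* The modulus of continuity tends to zero in `L^{2+δ}` as `m → ∞`, by dominated convergence
  (`tendsto_eLpNorm_gridOsc`), and `totalInc` is bounded in `Lᵖ` uniformly in `n` by Gaussian
  scaling (`IsFBM.eLpNorm_totalInc_le`).
* For fixed `m` the block sums tend to zero in `Lᵖ` as `n → ∞` (`IsFBM.tendsto_sum_centered`). In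
  `L²` this is a decorrelation statement: the covariance of the squares of two centered jointly
  Gaussian variables is twice the square of their covariance (`IsFBM.integral_sq_mul_sq`), and the
  covariance `rho H m` of unit increments at distance `m` tends to zero because `H < 1`
  (`rho_tendsto`), so that the second moments are Cesàro means of a null sequence
  (`IsFBM.second_moment_le`, `varBound_tendsto`). Interpolation with the uniform bounds in higher
  `L^q` spaces passes from `L²` to `Lᵖ` (`tendsto_eLpNorm_of_interp`).
-/

open MeasureTheory ProbabilityTheory Filter

/-- The covariance function of fractional Brownian motion with Hurst index `H`:
`E[B_s B_t] = (1/2)(s^{2H} + t^{2H} - |t-s|^{2H})`. -/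
noncomputable def fbmCov (H s t : ℝ) : ℝ :=
  (|s| ^ (2 * H) + |t| ^ (2 * H) - |s - t| ^ (2 * H)) / 2

/-- `B` is a fractional Brownian motion with Hurst index `H` on `[0,T]`: a jointly
measurable process whose finite-dimensional distributions are centered Gaussian with
covariance `fbmCov H`; equivalently, every linear combination `Σ c_i B_{t_i}` is a
centered real Gaussian with the corresponding variance. -/
def IsFBM {Ω : Type*} [MeasurableSpace Ω] (P : Measure Ω) (H T : ℝ)
    (B : ℝ → Ω → ℝ) : Prop :=
  Measurable (Function.uncurry B) ∧
  ∀ (m : ℕ) (ts : Fin m → ℝ), (∀ i, ts i ∈ Set.Icc (0 : ℝ) T) →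
    ∀ c : Fin m → ℝ,
      Measure.map (fun ω => ∑ i, c i * B (ts i) ω) P =
        gaussianReal 0 (∑ i, ∑ j, c i * c j * fbmCov H (ts i) (ts j)).toNNReal

/-- The σ-algebra generated by the process `B` on `[0,T]`. -/
def sigmaB {Ω : Type*} [MeasurableSpace Ω] (T : ℝ) (B : ℝ → Ω → ℝ) :
    MeasurableSpace Ω :=
  MeasurableSpace.comap (fun ω => fun u : Set.Icc (0 : ℝ) T => B u ω) inferInstance

/-! ### Gaussian moments and increments of fractional Brownian motion -/

/-- The fourth moment of the standard Gaussian law is `3`. -/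
lemma integral_pow_four_gaussianReal :
    ∫ z : ℝ, z ^ 4 ∂(gaussianReal 0 1) = 3 := by
  rw [integral_gaussianReal_eq_integral_smul one_ne_zero]
  have h1 : ∀ z : ℝ, gaussianPDFReal 0 1 z • z ^ 4
      = (√(2 * Real.pi))⁻¹ * (|z| ^ (4 : ℝ) * Real.exp (-(1 / 2) * |z| ^ (2 : ℝ))) := by
    intro z
    have e4 : |z| ^ (4 : ℝ) = z ^ 4 := by
      rw [show (4 : ℝ) = ((4 : ℕ) : ℝ) by norm_num, Real.rpow_natCast]
      exact Even.pow_abs (by decide) z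
    have e2 : |z| ^ (2 : ℝ) = z ^ 2 := by
      rw [show (2 : ℝ) = ((2 : ℕ) : ℝ) by norm_num, Real.rpow_natCast]
      exact sq_abs z
    rw [e4, e2, gaussianPDFReal]
    simp only [NNReal.coe_one, mul_one, sub_zero, smul_eq_mul]
    rw [show -z ^ 2 / 2 = -(1 / 2) * z ^ 2 by ring]
    ring
  simp_rw [h1]
  rw [integral_const_mul,
    integral_comp_abs (f := fun z => z ^ (4 : ℝ) * Real.exp (-(1 / 2) * z ^ (2 : ℝ))),
    integral_rpow_mul_exp_neg_mul_rpow (by norm_num) (by norm_num) (by norm_num)]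
  have hG : Real.Gamma ((4 + 1) / 2) = 3 / 4 * √Real.pi := by
    have := Real.Gamma_nat_add_half 2
    rw [show ((4 : ℝ) + 1) / 2 = ((2 : ℕ) : ℝ) + 1 / 2 by norm_num, this]
    norm_num [Nat.doubleFactorial]
    ring
  rw [hG]
  have hp : (1 / 2 : ℝ) ^ (-(4 + 1) / 2 : ℝ) = 4 * √2 := by
    rw [show (-(4 + 1) / 2 : ℝ) = -(2 + 1 / 2) by norm_num, Real.rpow_neg (by norm_num),
      ← Real.inv_rpow (by norm_num), show (1 / 2 : ℝ)⁻¹ = 2 by norm_num,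
      Real.rpow_add (by norm_num), ← Real.sqrt_eq_rpow]
    norm_num
  rw [hp, Real.sqrt_mul (by norm_num)]
  have h2 : √(2 : ℝ) ≠ 0 := by positivity
  have h3 : √Real.pi ≠ 0 := by positivity
  field_simp

/-- A centered Gaussian law is the image of the standard one under a scaling. -/
lemma gaussianReal_eq_map_scale {v : ℝ} (hv : 0 ≤ v) :
    gaussianReal 0 v.toNNReal = (gaussianReal 0 1).map (fun z => √v * z) := by
  rw [gaussianReal_map_const_mul]
  congr 1
  · simp
  · ext
    simp [hv, Real.sq_sqrt]

lemma integral_pow_four_gaussianReal_toNNReal {v : ℝ} (hv : 0 ≤ v) :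
    ∫ z : ℝ, z ^ 4 ∂(gaussianReal 0 v.toNNReal) = 3 * v ^ 2 := by
  rw [gaussianReal_eq_map_scale hv, integral_map (by fun_prop) (by fun_prop)]
  simp_rw [mul_pow]
  rw [integral_const_mul, integral_pow_four_gaussianReal,
    show √v ^ 4 = (√v ^ 2) ^ 2 by ring, Real.sq_sqrt hv]
  ring

lemma integral_sq_gaussianReal_toNNReal (v : ℝ) :
    ∫ z : ℝ, z ^ 2 ∂(gaussianReal 0 v.toNNReal) = max v 0 := by
  have := variance_fun_id_gaussianReal (μ := 0) (v := v.toNNReal)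
  rw [variance_eq_integral (by fun_prop)] at this
  simpa [integral_id_gaussianReal] using this

lemma memLp_sq_gaussianReal (p : ENNReal) (hp : p ≠ ⊤) :
    MemLp (fun z : ℝ => z ^ 2) p (gaussianReal 0 1) := by
  have h := memLp_id_gaussianReal' (μ := 0) (v := 1) (2 * p) (ENNReal.mul_ne_top (by simp) hp)
  have : ENNReal.HolderTriple (2 * p) (2 * p) p := ⟨by
    rw [ENNReal.mul_inv (by simp) (by simp), ← add_mul, ENNReal.inv_two_add_inv_two, one_mul]⟩
  have h2 := h.mul h (r := p)
  refine h2.congr_norm (by fun_prop) (.of_forall fun z => ?_)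
  simp [sq]

/-- The covariance of the increments of fractional Brownian motion over `[a, b]` and `[c, d]`. -/
noncomputable def incCov (H a b c d : ℝ) : ℝ :=
  (|a - d| ^ (2 * H) + |b - c| ^ (2 * H) - |a - c| ^ (2 * H) - |b - d| ^ (2 * H)) / 2

section FBM

variable {Ω : Type*} [MeasurableSpace Ω] {P : Measure Ω} {H T : ℝ} {B : ℝ → Ω → ℝ}

lemma IsFBM.measurable (hB : IsFBM P H T B) (s : ℝ) : Measurable (B s) :=
  hB.1.comp measurable_prodMk_left

/-- The law of a linear combination of two increments. -/
lemma IsFBM.map_inc (hB : IsFBM P H T B) (hH : 0 < H) {a b c d : ℝ}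
    (ha : a ∈ Set.Icc 0 T) (hb : b ∈ Set.Icc 0 T) (hc : c ∈ Set.Icc 0 T) (hd : d ∈ Set.Icc 0 T)
    (α β : ℝ) :
    P.map (fun ω => α * (B b ω - B a ω) + β * (B d ω - B c ω)) =
      gaussianReal 0 (α ^ 2 * |b - a| ^ (2 * H) + β ^ 2 * |d - c| ^ (2 * H)
        + 2 * α * β * incCov H a b c d).toNNReal := by
  have h := hB.2 4 ![b, a, d, c] (by
    intro i; fin_cases i <;> simp <;> assumption) ![α, -α, β, -β]
  have h0 : (0 : ℝ) ^ (2 * H) = 0 := Real.zero_rpow (by positivity)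
  have e1 : (fun ω => ∑ i, ![α, -α, β, -β] i * B (![b, a, d, c] i) ω)
      = fun ω => α * (B b ω - B a ω) + β * (B d ω - B c ω) := by
    ext ω
    simp [Fin.sum_univ_four]
    ring
  rw [e1] at h
  rw [h]
  congr 2
  simp only [Fin.sum_univ_four, fbmCov, incCov, Matrix.cons_val, sub_self, abs_zero, h0]
  rw [abs_sub_comm a b, abs_sub_comm c d, abs_sub_comm d b, abs_sub_comm c b,
    abs_sub_comm d a, abs_sub_comm c a]
  ring

lemma IsFBM.map_one (hB : IsFBM P H T B) (hH : 0 < H) {a b : ℝ}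
    (ha : a ∈ Set.Icc 0 T) (hb : b ∈ Set.Icc 0 T) :
    P.map (fun ω => B b ω - B a ω) = gaussianReal 0 (|b - a| ^ (2 * H)).toNNReal := by
  simpa using hB.map_inc hH ha hb ha hb 1 0

lemma integrable_pow_gaussianReal (v : NNReal) (k : ℕ) :
    Integrable (fun z : ℝ => z ^ k) (gaussianReal 0 v) := by
  have := (memLp_id_gaussianReal (μ := 0) (v := v) (k : NNReal)).integrable_norm_pow'
  rw [← integrable_norm_iff (by fun_prop)]
  simpa using this

lemma integral_pow_of_map {X : Ω → ℝ} {v : ℝ} (hX : Measurable X)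
    (h : P.map X = gaussianReal 0 v.toNNReal) (k : ℕ) :
    Integrable (fun ω => X ω ^ k) P ∧
      ∫ ω, X ω ^ k ∂P = ∫ z, z ^ k ∂(gaussianReal 0 v.toNNReal) := by
  constructor
  · have := integrable_pow_gaussianReal v.toNNReal k
    rw [← h] at this
    exact this.comp_measurable hX
  · rw [← h, integral_map hX.aemeasurable (by fun_prop)]

/-- Variances of sums and differences of increments are nonnegative. The law alone only gives
this through the parallelogram identity, since `toNNReal` truncates negative variances. -/
lemma IsFBM.var_nonneg (hB : IsFBM P H T B) (hH : 0 < H) {a b c d : ℝ}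
    (ha : a ∈ Set.Icc 0 T) (hb : b ∈ Set.Icc 0 T) (hc : c ∈ Set.Icc 0 T) (hd : d ∈ Set.Icc 0 T) :
    0 ≤ |b - a| ^ (2 * H) + |d - c| ^ (2 * H) + 2 * incCov H a b c d ∧
    0 ≤ |b - a| ^ (2 * H) + |d - c| ^ (2 * H) - 2 * incCov H a b c d := by
  have mX : Measurable (fun ω => B b ω - B a ω) := (hB.measurable b).sub (hB.measurable a)
  have mY : Measurable (fun ω => B d ω - B c ω) := (hB.measurable d).sub (hB.measurable c)
  have hp := integral_pow_of_map (by fun_prop) (hB.map_inc hH ha hb hc hd 1 1) 2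
  have hm := integral_pow_of_map (by fun_prop) (hB.map_inc hH ha hb hc hd 1 (-1)) 2
  have hx := integral_pow_of_map mX (hB.map_one hH ha hb) 2
  have hy := integral_pow_of_map mY (hB.map_one hH hc hd) 2
  rw [integral_sq_gaussianReal_toNNReal] at hp hm hx hy
  have hV1 : 0 ≤ |b - a| ^ (2 * H) := by positivity
  have hV2 : 0 ≤ |d - c| ^ (2 * H) := by positivity
  rw [max_eq_left hV1] at hx
  rw [max_eq_left hV2] at hy
  have key : ∫ ω, (1 * (B b ω - B a ω) + 1 * (B d ω - B c ω)) ^ 2 ∂P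
      + ∫ ω, (1 * (B b ω - B a ω) + (-1) * (B d ω - B c ω)) ^ 2 ∂P
      = 2 * ∫ ω, (B b ω - B a ω) ^ 2 ∂P + 2 * ∫ ω, (B d ω - B c ω) ^ 2 ∂P := by
    rw [← integral_add hp.1 hm.1, ← integral_const_mul, ← integral_const_mul,
      ← integral_add (hx.1.const_mul 2) (hy.1.const_mul 2)]
    congr 1; ext ω; ring
  rw [hp.2, hm.2, hx.2, hy.2] at key
  have l1 := le_max_left (1 ^ 2 * |b - a| ^ (2 * H) + 1 ^ 2 * |d - c| ^ (2 * H)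
        + 2 * 1 * 1 * incCov H a b c d) 0
  have l2 := le_max_left (1 ^ 2 * |b - a| ^ (2 * H) + (-1) ^ 2 * |d - c| ^ (2 * H)
        + 2 * 1 * (-1) * incCov H a b c d) 0
  have l3 := le_max_right (1 ^ 2 * |b - a| ^ (2 * H) + 1 ^ 2 * |d - c| ^ (2 * H)
        + 2 * 1 * 1 * incCov H a b c d) 0
  have l4 := le_max_right (1 ^ 2 * |b - a| ^ (2 * H) + (-1) ^ 2 * |d - c| ^ (2 * H)
        + 2 * 1 * (-1) * incCov H a b c d) 0
  constructor <;> linarith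

/-- Gaussian product formula for squared increments, obtained by polarizing fourth moments:
`12 X²Y² = (X+Y)⁴ + (X-Y)⁴ - 2X⁴ - 2Y⁴`. -/
lemma IsFBM.integral_sq_mul_sq (hB : IsFBM P H T B) (hH : 0 < H) {a b c d : ℝ}
    (ha : a ∈ Set.Icc 0 T) (hb : b ∈ Set.Icc 0 T) (hc : c ∈ Set.Icc 0 T) (hd : d ∈ Set.Icc 0 T) :
    Integrable (fun ω => (B b ω - B a ω) ^ 2 * (B d ω - B c ω) ^ 2) P ∧
    ∫ ω, (B b ω - B a ω) ^ 2 * (B d ω - B c ω) ^ 2 ∂P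
      = |b - a| ^ (2 * H) * |d - c| ^ (2 * H) + 2 * incCov H a b c d ^ 2 := by
  have mX : Measurable (fun ω => B b ω - B a ω) := (hB.measurable b).sub (hB.measurable a)
  have mY : Measurable (fun ω => B d ω - B c ω) := (hB.measurable d).sub (hB.measurable c)
  have hp := integral_pow_of_map (by fun_prop) (hB.map_inc hH ha hb hc hd 1 1) 4
  have hm := integral_pow_of_map (by fun_prop) (hB.map_inc hH ha hb hc hd 1 (-1)) 4
  have hx := integral_pow_of_map mX (hB.map_one hH ha hb) 4
  have hy := integral_pow_of_map mY (hB.map_one hH hc hd) 4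
  obtain ⟨n1, n2⟩ := hB.var_nonneg hH ha hb hc hd
  rw [integral_pow_four_gaussianReal_toNNReal (by linarith)] at hp hm
  rw [integral_pow_four_gaussianReal_toNNReal (by positivity)] at hx hy
  have e : (fun ω => (B b ω - B a ω) ^ 2 * (B d ω - B c ω) ^ 2) = fun ω =>
      (1 / 12) * (((1 * (B b ω - B a ω) + 1 * (B d ω - B c ω)) ^ 4
      + (1 * (B b ω - B a ω) + (-1) * (B d ω - B c ω)) ^ 4)
      - (2 * (B b ω - B a ω) ^ 4 + 2 * (B d ω - B c ω) ^ 4)) := by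
    ext ω; ring
  rw [e]
  refine ⟨((hp.1.add hm.1).sub ((hx.1.const_mul 2).add (hy.1.const_mul 2))).const_mul _, ?_⟩
  have hs := integral_sub (hp.1.add hm.1) ((hx.1.const_mul 2).add (hy.1.const_mul 2))
  simp only [Pi.add_apply] at hs
  rw [integral_const_mul, hs,
    integral_add hp.1 hm.1, integral_add (hx.1.const_mul 2) (hy.1.const_mul 2),
    integral_const_mul, integral_const_mul, hp.2, hm.2, hx.2, hy.2]
  ring

lemma IsFBM.integral_sq (hB : IsFBM P H T B) (hH : 0 < H) {a b : ℝ}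
    (ha : a ∈ Set.Icc 0 T) (hb : b ∈ Set.Icc 0 T) :
    Integrable (fun ω => (B b ω - B a ω) ^ 2) P ∧
    ∫ ω, (B b ω - B a ω) ^ 2 ∂P = |b - a| ^ (2 * H) := by
  have mX : Measurable (fun ω => B b ω - B a ω) := (hB.measurable b).sub (hB.measurable a)
  have hx := integral_pow_of_map mX (hB.map_one hH ha hb) 2
  rw [integral_sq_gaussianReal_toNNReal, max_eq_left (by positivity)] at hx
  exact hx

/-- Gaussian scaling of the `L^p` norm of a squared increment. -/
lemma IsFBM.eLpNorm_sq (hB : IsFBM P H T B) (hH : 0 < H) {a b : ℝ}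
    (ha : a ∈ Set.Icc 0 T) (hb : b ∈ Set.Icc 0 T) (p : ENNReal) :
    eLpNorm (fun ω => (B b ω - B a ω) ^ 2) p P
      = ENNReal.ofReal (|b - a| ^ (2 * H))
        * eLpNorm (fun z : ℝ => z ^ 2) p (gaussianReal 0 1) := by
  have mX : Measurable (fun ω => B b ω - B a ω) := (hB.measurable b).sub (hB.measurable a)
  have hv : 0 ≤ |b - a| ^ (2 * H) := by positivity
  have h1 : eLpNorm (fun ω => (B b ω - B a ω) ^ 2) p P
      = eLpNorm (fun z : ℝ => z ^ 2) p (P.map (fun ω => B b ω - B a ω)) := by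
    rw [eLpNorm_map_measure (by fun_prop) mX.aemeasurable]; rfl
  rw [h1, hB.map_one hH ha hb, gaussianReal_eq_map_scale hv,
    eLpNorm_map_measure (by fun_prop) (by fun_prop)]
  have h2 : ((fun z : ℝ => z ^ 2) ∘ fun z => √(|b - a| ^ (2 * H)) * z)
      = (|b - a| ^ (2 * H)) • fun z : ℝ => z ^ 2 := by
    ext z
    simp only [Function.comp, Pi.smul_apply, smul_eq_mul, mul_pow, Real.sq_sqrt hv]
  rw [h2, eLpNorm_const_smul, Real.enorm_of_nonneg hv]

end FBM

/-! ### Decorrelation of squared increments -/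

/-- The covariance of two unit increments of fractional Brownian motion at distance `m`; the
absolute value makes the formula valid at `m = 0`, where it gives the variance `1`. -/
noncomputable def rho (H : ℝ) (m : ℕ) : ℝ :=
  (|(m : ℝ) - 1| ^ (2 * H) + ((m : ℝ) + 1) ^ (2 * H) - 2 * (m : ℝ) ^ (2 * H)) / 2

/-- Bernoulli's inequalities give `0 ≤ rho H m ≤ (2H - 1) m ^ (2H - 2)`, whence `rho H m → 0`. -/
lemma rho_tendsto {H : ℝ} (hH : H ∈ Set.Ioo (1 / 2 : ℝ) 1) :
    Tendsto (rho H) atTop (nhds 0) := by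
  obtain ⟨h1, h2⟩ := hH
  have key : ∀ m : ℕ, 1 ≤ m →
      0 ≤ rho H m ∧ rho H m ≤ (2 * H - 1) * (m : ℝ) ^ (-(2 - 2 * H)) := by
    intro m hm
    have hm1 : (1 : ℝ) ≤ m := by exact_mod_cast hm
    have hm0 : (0 : ℝ) < m := by linarith
    set h : ℝ := 1 / m with hh
    have hh0 : 0 < h := by positivity
    have hh1 : h ≤ 1 := by rw [hh, div_le_one hm0]; exact hm1
    have e1 : |(m : ℝ) - 1| ^ (2 * H) = (m : ℝ) ^ (2 * H) * (1 + -h) ^ (2 * H) := by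
      rw [← Real.mul_rpow hm0.le (by linarith), abs_of_nonneg (by linarith)]
      congr 1; rw [hh]; field_simp; ring
    have e2 : ((m : ℝ) + 1) ^ (2 * H) = (m : ℝ) ^ (2 * H) * (1 + h) ^ (2 * H) := by
      rw [← Real.mul_rpow hm0.le (by linarith)]
      congr 1; rw [hh]; field_simp
    have hmH : 0 < (m : ℝ) ^ (2 * H) := by positivity
    have er : rho H m = (m : ℝ) ^ (2 * H) * ((1 + -h) ^ (2 * H) + (1 + h) ^ (2 * H) - 2) / 2 := by
      rw [rho, e1, e2]; ring
    have l1 := one_add_mul_self_le_rpow_one_add (s := h) (by linarith) (p := 2 * H) (by linarith)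
    have l2 := one_add_mul_self_le_rpow_one_add (s := -h) (by linarith) (p := 2 * H) (by linarith)
    have u1 := rpow_one_add_le_one_add_mul_self (s := h) (by linarith) (p := 2 * H - 1)
      (by linarith) (by linarith)
    have u2 := rpow_one_add_le_one_add_mul_self (s := -h) (by linarith) (p := 2 * H - 1)
      (by linarith) (by linarith)
    have s1 : (1 + h) ^ (2 * H) = (1 + h) * (1 + h) ^ (2 * H - 1) := by
      rw [← Real.rpow_one_add' (by linarith) (by linarith)]; congr 1; ring
    have s2 : (1 + -h) ^ (2 * H) = (1 + -h) * (1 + -h) ^ (2 * H - 1) := by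
      rw [← Real.rpow_one_add' (by linarith) (by linarith)]; congr 1; ring
    have t1 : (1 + h) ^ (2 * H) ≤ (1 + h) * (1 + (2 * H - 1) * h) := by
      rw [s1]; exact mul_le_mul_of_nonneg_left u1 (by linarith)
    have t2 : (1 + -h) ^ (2 * H) ≤ (1 + -h) * (1 + (2 * H - 1) * -h) := by
      rw [s2]; exact mul_le_mul_of_nonneg_left u2 (by linarith)
    constructor
    · rw [er]
      have : 0 ≤ (1 + -h) ^ (2 * H) + (1 + h) ^ (2 * H) - 2 := by linarith
      positivity
    · have e3 : (m : ℝ) ^ (-(2 - 2 * H)) = (m : ℝ) ^ (2 * H) * h ^ 2 := by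
        rw [show -(2 - 2 * H) = 2 * H - (2 : ℕ) by push_cast; ring, Real.rpow_sub hm0,
          Real.rpow_natCast, hh]
        field_simp
      rw [er, e3]
      have : (1 + -h) ^ (2 * H) + (1 + h) ^ (2 * H) - 2 ≤ 2 * (2 * H - 1) * h ^ 2 := by nlinarith
      have := mul_le_mul_of_nonneg_left this hmH.le
      nlinarith
  have lim : Tendsto (fun m : ℕ => (2 * H - 1) * (m : ℝ) ^ (-(2 - 2 * H))) atTop (nhds 0) := by
    have := ((tendsto_rpow_neg_atTop (y := 2 - 2 * H) (by linarith)).comp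
      tendsto_natCast_atTop_atTop).const_mul (2 * H - 1)
    simpa using this
  refine squeeze_zero' ?_ ?_ lim
  · filter_upwards [eventually_ge_atTop 1] with m hm using (key m hm).1
  · filter_upwards [eventually_ge_atTop 1] with m hm using (key m hm).2

/-- Row sums of a matrix with entries `f |k - l|`: every distance is attained by at most one
`l ≤ k` and at most one `l > k`. -/
lemma sum_dist_le {f : ℕ → ℝ} (hf : ∀ m, 0 ≤ f m) (N k : ℕ) (hk : k < N) :
    ∑ l ∈ Finset.range N, f (Nat.dist k l) ≤ 2 * ∑ m ∈ Finset.range N, f m := by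
  rw [← Finset.sum_filter_add_sum_filter_not (Finset.range N) (fun l => l ≤ k), two_mul]
  have aux : ∀ s : Finset ℕ, s ⊆ Finset.range N → Set.InjOn (fun l => Nat.dist k l) s →
      ∑ l ∈ s, f (Nat.dist k l) ≤ ∑ m ∈ Finset.range N, f m := by
    intro s hs hinj
    rw [← Finset.sum_image (f := f) (g := fun l => Nat.dist k l) hinj]
    refine Finset.sum_le_sum_of_subset_of_nonneg ?_ (fun i _ _ => hf i)
    intro m hm
    obtain ⟨l, hl, rfl⟩ := Finset.mem_image.1 hm
    have := Finset.mem_range.1 (hs hl)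
    simp only [Nat.dist, Finset.mem_range]
    omega
  refine add_le_add (aux _ (Finset.filter_subset _ _) ?_) (aux _ (Finset.filter_subset _ _) ?_)
  · intro a ha b hb hab
    simp only [Finset.coe_filter, Set.mem_ofPred_eq, Nat.dist] at ha hb hab
    omega
  · intro a ha b hb hab
    simp only [Finset.coe_filter, Set.mem_ofPred_eq, Nat.dist] at ha hb hab
    omega

/-- The normalized squared increment `n ^ (2H - 1) (B_{min((k+1)/n, t)} - B_{k/n})²`. -/
noncomputable def sqInc {Ω : Type*} (H t : ℝ) (B : ℝ → Ω → ℝ) (n k : ℕ) (ω : Ω) : ℝ :=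
  (n : ℝ) ^ (2 * H - 1) * (B (min (((k : ℝ) + 1) / n) t) ω - B ((k : ℝ) / n) ω) ^ 2

/-- The expectation of `sqInc H t B n k` when both endpoints of the increment lie in `[0, T]`. -/
noncomputable def meanInc (H t : ℝ) (n k : ℕ) : ℝ :=
  (n : ℝ) ^ (2 * H - 1) * |min (((k : ℝ) + 1) / n) t - (k : ℝ) / n| ^ (2 * H)

section Grid

variable {t T H : ℝ} {n k l : ℕ}

lemma div_le_of_le_floor (hn : 1 ≤ n) (ht : 0 ≤ t) (hk : k ≤ ⌊(n : ℝ) * t⌋₊) :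
    (k : ℝ) / n ≤ t := by
  have hn0 : (0 : ℝ) < n := by exact_mod_cast hn
  rw [div_le_iff₀ hn0, mul_comm]
  exact (Nat.le_floor_iff (by positivity)).1 hk

lemma left_mem (hn : 1 ≤ n) (ht : t ∈ Set.Icc 0 T) (hk : k ≤ ⌊(n : ℝ) * t⌋₊) :
    (k : ℝ) / n ∈ Set.Icc 0 T :=
  ⟨by positivity, (div_le_of_le_floor hn ht.1 hk).trans ht.2⟩

lemma right_mem (ht : t ∈ Set.Icc 0 T) : min (((k : ℝ) + 1) / n) t ∈ Set.Icc 0 T :=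
  ⟨le_min (by positivity) ht.1, (min_le_right _ _).trans ht.2⟩

/-- Only the last interval, of index `⌊nt⌋`, is cut off at `t`. -/
lemma right_eq (hn : 1 ≤ n) (ht : 0 ≤ t) (hk : k < ⌊(n : ℝ) * t⌋₊) :
    min (((k : ℝ) + 1) / n) t = ((k : ℝ) + 1) / n := by
  have := div_le_of_le_floor hn ht (Nat.succ_le_iff.2 hk)
  push_cast at this
  exact min_eq_left this

lemma len_mem (hn : 1 ≤ n) (ht : 0 ≤ t) (hk : k ≤ ⌊(n : ℝ) * t⌋₊) :
    0 ≤ min (((k : ℝ) + 1) / n) t - (k : ℝ) / n ∧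
      min (((k : ℝ) + 1) / n) t - (k : ℝ) / n ≤ 1 / n := by
  have h := div_le_of_le_floor hn ht hk
  constructor
  · have : (k : ℝ) / n ≤ ((k : ℝ) + 1) / n := by gcongr; linarith
    linarith [le_min this h]
  · have := min_le_left (((k : ℝ) + 1) / n) t
    rw [add_div] at this ⊢
    linarith

lemma var_le (hH : 0 < H) (hn : 1 ≤ n) (ht : 0 ≤ t) (hk : k ≤ ⌊(n : ℝ) * t⌋₊) :
    (n : ℝ) ^ (2 * H) * |min (((k : ℝ) + 1) / n) t - (k : ℝ) / n| ^ (2 * H) ≤ 1 := by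
  have hn0 : (0 : ℝ) < n := by exact_mod_cast hn
  obtain ⟨h0, h1⟩ := len_mem hn ht hk
  rw [← Real.mul_rpow hn0.le (abs_nonneg _), abs_of_nonneg h0]
  refine Real.rpow_le_one (by positivity) ?_ (by positivity)
  rw [le_div_iff₀ hn0] at h1
  linarith

lemma meanInc_nonneg : 0 ≤ meanInc H t n k := by unfold meanInc; positivity

lemma meanInc_le (hH : 0 < H) (hn : 1 ≤ n) (ht : 0 ≤ t) (hk : k ≤ ⌊(n : ℝ) * t⌋₊) :
    meanInc H t n k ≤ 1 / n := by
  have hn0 : (0 : ℝ) < n := by exact_mod_cast hn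
  have := var_le hH hn ht hk
  rw [meanInc, Real.rpow_sub hn0, Real.rpow_one, le_div_iff₀ hn0]
  refine le_of_eq_of_le ?_ this
  rw [div_mul_eq_mul_div, div_mul_cancel₀ _ hn0.ne']

lemma meanInc_eq (hn : 1 ≤ n) (ht : 0 ≤ t) (hk : k < ⌊(n : ℝ) * t⌋₊) :
    meanInc H t n k = 1 / n := by
  have hn0 : (0 : ℝ) < n := by exact_mod_cast hn
  rw [meanInc, right_eq hn ht hk, show ((k : ℝ) + 1) / n - k / n = (n : ℝ)⁻¹ by field_simp; ring,
    abs_of_pos (by positivity), Real.inv_rpow hn0.le, Real.rpow_sub hn0, Real.rpow_one]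
  have : (n : ℝ) ^ (2 * H) ≠ 0 := by positivity
  field_simp

lemma card_le (hn : 1 ≤ n) (ht : 0 ≤ t) :
    ((⌊(n : ℝ) * t⌋₊ + 1 : ℕ) : ℝ) ≤ n * (t + 1) := by
  have hn1 : (1 : ℝ) ≤ n := by exact_mod_cast hn
  have := Nat.floor_le (show 0 ≤ (n : ℝ) * t by positivity)
  push_cast
  linarith

lemma sum_meanInc_le (hH : 0 < H) (hn : 1 ≤ n) (ht : 0 ≤ t) :
    ∑ k ∈ Finset.range (⌊(n : ℝ) * t⌋₊ + 1), meanInc H t n k ≤ t + 1 := by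
  have hn0 : (0 : ℝ) < n := by exact_mod_cast hn
  calc _ ≤ ∑ k ∈ Finset.range (⌊(n : ℝ) * t⌋₊ + 1), (1 / n : ℝ) :=
        Finset.sum_le_sum fun k hk =>
          meanInc_le hH hn ht (Nat.lt_succ_iff.1 (Finset.mem_range.1 hk))
    _ = ((⌊(n : ℝ) * t⌋₊ + 1 : ℕ) : ℝ) / n := by
        rw [Finset.sum_const, Finset.card_range, nsmul_eq_mul]; ring
    _ ≤ t + 1 := by
        rw [div_le_iff₀ hn0, mul_comm (t + 1)]; exact card_le hn ht

/-- Self-similarity and stationarity: on full grid intervals the covariance of the increments,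
rescaled by `n ^ (2H)`, depends only on the distance of the indices. -/
lemma incCov_grid (hn : 1 ≤ n) (ht : 0 ≤ t)
    (hk : k < ⌊(n : ℝ) * t⌋₊) (hl : l < ⌊(n : ℝ) * t⌋₊) :
    (n : ℝ) ^ (2 * H) * incCov H (k / n) (min (((k : ℝ) + 1) / n) t)
      (l / n) (min (((l : ℝ) + 1) / n) t) = rho H (Nat.dist k l) := by
  have hn0 : (0 : ℝ) < n := by exact_mod_cast hn
  rw [right_eq hn ht hk, right_eq hn ht hl, incCov]
  have hN : (n : ℝ) ^ (2 * H) ≠ 0 := by positivity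
  have e : ∀ u v : ℝ, |u / n - v / n| ^ (2 * H) = |u - v| ^ (2 * H) / (n : ℝ) ^ (2 * H) := by
    intro u v
    rw [← sub_div, abs_div, abs_of_pos hn0, Real.div_rpow (abs_nonneg _) hn0.le]
  rw [e, e, e, e]
  field_simp
  rcases le_total k l with h | h
  · have hd : ((Nat.dist k l : ℕ) : ℝ) = l - k := by
      rw [Nat.dist_eq_sub_of_le h, Nat.cast_sub h]
    have hc : (k : ℝ) ≤ l := by exact_mod_cast h
    rw [rho, hd, abs_sub_comm (k : ℝ) (l + 1), abs_of_nonneg (a := (l : ℝ) + 1 - k) (by linarith),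
      abs_sub_comm (k : ℝ) l, abs_of_nonneg (a := (l : ℝ) - k) (by linarith),
      abs_sub_comm ((k : ℝ) + 1) l,
      abs_sub_comm ((k : ℝ) + 1) (l + 1), show (l : ℝ) + 1 - (k + 1) = l - k by ring,
      abs_of_nonneg (a := (l : ℝ) - k) (by linarith),
      show (l : ℝ) - (k + 1) = l - k - 1 by ring, show (l : ℝ) - k + 1 = l + 1 - k by ring]
    ring
  · have hd : ((Nat.dist k l : ℕ) : ℝ) = k - l := by
      rw [Nat.dist_eq_sub_of_le_right h, Nat.cast_sub h]
    have hc : (l : ℝ) ≤ k := by exact_mod_cast h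
    rw [rho, hd, abs_of_nonneg (a := (k : ℝ) + 1 - l) (by linarith),
      abs_of_nonneg (a := (k : ℝ) - l) (by linarith),
      show (k : ℝ) + 1 - (l + 1) = k - l by ring,
      abs_of_nonneg (a := (k : ℝ) - l) (by linarith),
      show (k : ℝ) - (l + 1) = k - l - 1 by ring, show (k : ℝ) - l + 1 = k + 1 - l by ring]
    ring

variable {Ω : Type*} [MeasurableSpace Ω] {P : Measure Ω} {B : ℝ → Ω → ℝ}

/-- Away from the last, possibly shorter, interval the normalized covariance is `rho`; on the
last one the Cauchy-Schwarz bound suffices, since there are only `O(n)` such pairs. -/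
lemma IsFBM.incCov_sq_le (hB : IsFBM P H T B) (hH : 0 < H) (hn : 1 ≤ n) (ht : t ∈ Set.Icc 0 T)
    (hk : k ≤ ⌊(n : ℝ) * t⌋₊) (hl : l ≤ ⌊(n : ℝ) * t⌋₊) :
    ((n : ℝ) ^ (2 * H) * incCov H (k / n) (min (((k : ℝ) + 1) / n) t)
      (l / n) (min (((l : ℝ) + 1) / n) t)) ^ 2 ≤ rho H (Nat.dist k l) ^ 2
      + (if k = ⌊(n : ℝ) * t⌋₊ then 1 else 0) + (if l = ⌊(n : ℝ) * t⌋₊ then 1 else 0) := by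
  by_cases h : k < ⌊(n : ℝ) * t⌋₊ ∧ l < ⌊(n : ℝ) * t⌋₊
  · rw [incCov_grid hn ht.1 h.1 h.2, if_neg h.1.ne, if_neg h.2.ne]
    simp
  · have h1 : (1 : ℝ) ≤ (if k = ⌊(n : ℝ) * t⌋₊ then 1 else 0)
        + (if l = ⌊(n : ℝ) * t⌋₊ then 1 else 0) := by
      split_ifs <;> first | (exfalso; omega) | norm_num
    obtain ⟨n1, n2⟩ := hB.var_nonneg hH (left_mem hn ht hk) (right_mem (n := n) (k := k) ht)
      (left_mem hn ht hl) (right_mem (n := n) (k := l) ht)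
    have v1 := var_le hH hn ht.1 hk
    have v2 := var_le hH hn ht.1 hl
    have hN : 0 ≤ (n : ℝ) ^ (2 * H) := by positivity
    have m1 := mul_nonneg hN n1
    have m2 := mul_nonneg hN n2
    have : |(n : ℝ) ^ (2 * H) * incCov H (k / n) (min (((k : ℝ) + 1) / n) t)
      (l / n) (min (((l : ℝ) + 1) / n) t)| ≤ 1 := by
      rw [abs_le]; constructor <;> nlinarith
    have h2 := (sq_le_one_iff_abs_le_one _).2 this
    have := sq_nonneg (rho H (Nat.dist k l))
    linarith

lemma IsFBM.measurable_sqInc (hB : IsFBM P H T B) : Measurable (sqInc H t B n k) :=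
  (((hB.measurable _).sub (hB.measurable _)).pow_const 2).const_mul _

/-- Centered normalized squared increments have covariance `2 n⁻² (n ^ (2H) incCov)²`. -/
lemma IsFBM.integral_centered (hB : IsFBM P H T B) [IsProbabilityMeasure P]
    (hH : 0 < H) (hn : 1 ≤ n) (ht : t ∈ Set.Icc 0 T)
    (hk : k ≤ ⌊(n : ℝ) * t⌋₊) (hl : l ≤ ⌊(n : ℝ) * t⌋₊) :
    Integrable (fun ω => (sqInc H t B n k ω - meanInc H t n k)
        * (sqInc H t B n l ω - meanInc H t n l)) P ∧
    ∫ ω, (sqInc H t B n k ω - meanInc H t n k) * (sqInc H t B n l ω - meanInc H t n l) ∂P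
      = 2 / (n : ℝ) ^ 2 * ((n : ℝ) ^ (2 * H) * incCov H (k / n) (min (((k : ℝ) + 1) / n) t)
      (l / n) (min (((l : ℝ) + 1) / n) t)) ^ 2 := by
  have hn0 : (0 : ℝ) < n := by exact_mod_cast hn
  have kl := left_mem hn ht hk
  have kr := right_mem (n := n) (k := k) ht
  have ll := left_mem hn ht hl
  have lr := right_mem (n := n) (k := l) ht
  obtain ⟨i1, e1⟩ := hB.integral_sq_mul_sq hH kl kr ll lr
  obtain ⟨i2, e2⟩ := hB.integral_sq hH kl kr
  obtain ⟨i3, e3⟩ := hB.integral_sq hH ll lr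
  set q : ℝ := (n : ℝ) ^ (2 * H - 1) with hq
  set V := |min (((k : ℝ) + 1) / n) t - (k : ℝ) / n| ^ (2 * H) with hV
  set W := |min (((l : ℝ) + 1) / n) t - (l : ℝ) / n| ^ (2 * H) with hW
  have e : (fun ω => (sqInc H t B n k ω - meanInc H t n k)
        * (sqInc H t B n l ω - meanInc H t n l)) = fun ω =>
      q ^ 2 * ((B (min (((k : ℝ) + 1) / n) t) ω - B ((k : ℝ) / n) ω) ^ 2
        * (B (min (((l : ℝ) + 1) / n) t) ω - B ((l : ℝ) / n) ω) ^ 2)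
      - q ^ 2 * W * (B (min (((k : ℝ) + 1) / n) t) ω - B ((k : ℝ) / n) ω) ^ 2
      - q ^ 2 * V * (B (min (((l : ℝ) + 1) / n) t) ω - B ((l : ℝ) / n) ω) ^ 2
      + q ^ 2 * V * W := by
    ext ω
    simp only [sqInc, meanInc, ← hq, ← hV, ← hW]
    ring
  rw [e]
  have j1 := i1.const_mul (q ^ 2)
  have j2 := i2.const_mul (q ^ 2 * W)
  have j3 := i3.const_mul (q ^ 2 * V)
  have j12 := j1.sub j2
  have j123 := j12.sub j3
  refine ⟨j123.add (integrable_const _), ?_⟩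
  have s1 := integral_add j123 (integrable_const (q ^ 2 * V * W))
  have s2 := integral_sub j12 j3
  have s3 := integral_sub j1 j2
  simp only [Pi.sub_apply] at s1 s2 s3
  rw [s1, s2, s3, integral_const_mul, integral_const_mul, integral_const_mul, e1, e2, e3]
  have hq2 : (n : ℝ) ^ (2 * H) = q * n := by
    rw [hq, Real.rpow_sub hn0, Real.rpow_one]; field_simp
  rw [hq2]
  simp only [integral_const, probReal_univ, one_smul]
  field_simp
  ring

/-- An upper bound for the second moment of every `[-1, 1]`-weighted sum of the centered squared
increments over `[0, t]`, where `t + 1 ≤ K`. -/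
noncomputable def varBound (H : ℝ) (K n : ℕ) : ℝ :=
  4 * (K : ℝ) ^ 2 * (((n * K : ℕ) : ℝ)⁻¹ * ∑ m ∈ Finset.range (n * K), rho H m ^ 2)
    + 4 * K / n

/-- Up to an `O(1/n)` term, `varBound` is a Cesàro mean of the null sequence `rho H m ^ 2`. -/
lemma varBound_tendsto (hH : H ∈ Set.Ioo (1 / 2 : ℝ) 1) {K : ℕ} (hK : 1 ≤ K) :
    Tendsto (varBound H K) atTop (nhds 0) := by
  have h1 : Tendsto (fun m => rho H m ^ 2) atTop (nhds 0) := by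
    simpa using (rho_tendsto hH).pow 2
  have h2 := h1.cesaro.comp (tendsto_id.atTop_mul_const' (show 0 < K by omega))
  have h3 := (h2.const_mul (4 * (K : ℝ) ^ 2)).add
    (tendsto_const_div_atTop_nhds_zero_nat (4 * (K : ℝ)))
  rw [mul_zero, add_zero] at h3
  exact h3

/-- Decorrelation estimate, uniform over coefficients in `[-1, 1]`. The square is expanded into the
covariances `2 n⁻² (n ^ (2H) incCov)²`; summing `rho H |k - l| ^ 2` over a row costs at most twice
its sum over all distances, there are at most `nK` rows, and the `O(n)` pairs that involve the last
interval contribute `O(1/n)`. -/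
lemma IsFBM.second_moment_le (hB : IsFBM P H T B) [IsProbabilityMeasure P]
    (hH : 0 < H) (hn : 1 ≤ n) (ht : t ∈ Set.Icc 0 T) {K : ℕ} (hK : t + 1 ≤ K)
    {c : ℕ → ℝ} (hc : ∀ k, |c k| ≤ 1) :
    Integrable (fun ω => (∑ k ∈ Finset.range (⌊(n : ℝ) * t⌋₊ + 1),
      c k * (sqInc H t B n k ω - meanInc H t n k)) ^ 2) P ∧
    ∫ ω, (∑ k ∈ Finset.range (⌊(n : ℝ) * t⌋₊ + 1),
      c k * (sqInc H t B n k ω - meanInc H t n k)) ^ 2 ∂P ≤ varBound H K n := by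
  have hn0 : (0 : ℝ) < n := by exact_mod_cast hn
  have ht0 := ht.1
  set N := ⌊(n : ℝ) * t⌋₊ with hN
  have hmem : ∀ {k}, k ∈ Finset.range (N + 1) → k ≤ N := fun hk =>
    Nat.lt_succ_iff.1 (Finset.mem_range.1 hk)
  have e : (fun ω => (∑ k ∈ Finset.range (N + 1),
      c k * (sqInc H t B n k ω - meanInc H t n k)) ^ 2) = fun ω =>
      ∑ k ∈ Finset.range (N + 1), ∑ l ∈ Finset.range (N + 1),
        c k * c l * ((sqInc H t B n k ω - meanInc H t n k)
          * (sqInc H t B n l ω - meanInc H t n l)) := by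
    ext ω
    rw [sq, Finset.sum_mul_sum]
    refine Finset.sum_congr rfl fun k _ => Finset.sum_congr rfl fun l _ => ?_
    ring
  have hint : ∀ k ∈ Finset.range (N + 1), ∀ l ∈ Finset.range (N + 1),
      Integrable (fun ω => c k * c l * ((sqInc H t B n k ω - meanInc H t n k)
          * (sqInc H t B n l ω - meanInc H t n l))) P := fun k hk l hl =>
    (hB.integral_centered hH hn ht (hmem hk) (hmem hl)).1.const_mul _
  rw [e]
  refine ⟨integrable_finsetSum _ fun k hk => integrable_finsetSum _ (hint k hk), ?_⟩
  rw [integral_finsetSum _ fun k hk => integrable_finsetSum _ (hint k hk)]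
  have step : ∀ k ∈ Finset.range (N + 1),
      ∫ ω, ∑ l ∈ Finset.range (N + 1), c k * c l * ((sqInc H t B n k ω - meanInc H t n k)
          * (sqInc H t B n l ω - meanInc H t n l)) ∂P ≤
      2 / (n : ℝ) ^ 2 * ∑ l ∈ Finset.range (N + 1), (rho H (Nat.dist k l) ^ 2
      + (if k = N then 1 else 0) + (if l = N then 1 else 0)) := by
    intro k hk
    rw [integral_finsetSum _ (hint k hk), Finset.mul_sum]
    refine Finset.sum_le_sum fun l hl => ?_
    rw [integral_const_mul, (hB.integral_centered hH hn ht (hmem hk) (hmem hl)).2]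
    have hcc : c k * c l ≤ 1 := by
      refine (le_abs_self _).trans ?_
      rw [abs_mul]
      exact mul_le_one₀ (hc k) (abs_nonneg _) (hc l)
    refine (mul_le_of_le_one_left (by positivity) hcc).trans ?_
    exact mul_le_mul_of_nonneg_left (hB.incCov_sq_le hH hn ht (hmem hk) (hmem hl)) (by positivity)
  refine (Finset.sum_le_sum step).trans ?_
  have hcard : ((N + 1 : ℕ) : ℝ) ≤ n * K :=
    (card_le hn ht0).trans (by gcongr)
  have hcardN : N + 1 ≤ n * K := by exact_mod_cast hcard
  have row : ∀ k ∈ Finset.range (N + 1),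
      ∑ l ∈ Finset.range (N + 1), (rho H (Nat.dist k l) ^ 2
        + (if k = N then (1 : ℝ) else 0) + (if l = N then 1 else 0))
      ≤ 2 * ∑ m ∈ Finset.range (n * K), rho H m ^ 2 + (N + 1 : ℕ) * (if k = N then 1 else 0)
        + 1 := by
    intro k hk
    rw [Finset.sum_add_distrib, Finset.sum_add_distrib, Finset.sum_const, Finset.card_range,
      nsmul_eq_mul, Finset.sum_ite_eq' (Finset.range (N + 1)) N,
      if_pos (Finset.mem_range.2 (Nat.lt_succ_self N))]
    have h1 := sum_dist_le (f := fun m => rho H m ^ 2) (fun m => sq_nonneg _) (N + 1) k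
      (Finset.mem_range.1 hk)
    have h2 : ∑ m ∈ Finset.range (N + 1), rho H m ^ 2
        ≤ ∑ m ∈ Finset.range (n * K), rho H m ^ 2 :=
      Finset.sum_le_sum_of_subset_of_nonneg (Finset.range_mono hcardN) fun i _ _ => sq_nonneg _
    linarith
  rw [← Finset.mul_sum]
  have tot := Finset.sum_le_sum row
  rw [Finset.sum_add_distrib, Finset.sum_add_distrib, Finset.sum_const, Finset.sum_const,
    Finset.card_range, nsmul_eq_mul, nsmul_eq_mul, ← Finset.mul_sum,
    Finset.sum_ite_eq' (Finset.range (N + 1)) N,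
    if_pos (Finset.mem_range.2 (Nat.lt_succ_self N))] at tot
  have hS : 0 ≤ ∑ m ∈ Finset.range (n * K), rho H m ^ 2 := Finset.sum_nonneg fun i _ => sq_nonneg _
  set S := ∑ m ∈ Finset.range (n * K), rho H m ^ 2 with hSdef
  calc _ ≤ 2 / (n : ℝ) ^ 2 * (((N + 1 : ℕ) : ℝ) * (2 * S) + ((N + 1 : ℕ) : ℝ) * 1
          + ((N + 1 : ℕ) : ℝ) * 1) := mul_le_mul_of_nonneg_left tot (by positivity)
    _ = 2 / (n : ℝ) ^ 2 * (((N + 1 : ℕ) : ℝ) * (2 * S + 2)) := by ring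
    _ ≤ 2 / (n : ℝ) ^ 2 * ((n * K) * (2 * S + 2)) := by gcongr
    _ = varBound H K n := by
        have hK0 : (K : ℝ) ≠ 0 := by linarith
        rw [varBound, ← hSdef]
        push_cast
        field_simp
        ring

end Grid

/-! ### Convergence in Lᵖ: interpolation, domination, products -/

section LpTools

variable {Ω : Type*} [MeasurableSpace Ω] {P : Measure Ω}

/-- Interpolation of `Lᵖ` between `L²` and `L^{2p-2}`, by the Cauchy-Schwarz inequality applied to
`|f| * |f|^(p-1)`. -/
lemma eLpNorm_interp {p : ℝ} (hp : 1 < p) {f : Ω → ℝ} (hf : AEStronglyMeasurable f P) :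
    eLpNorm f (ENNReal.ofReal p) P ≤
      (eLpNorm f 2 P * eLpNorm f (ENNReal.ofReal (2 * p - 2)) P ^ (p - 1)) ^ (1 / p) := by
  have hp0 : 0 < p := by linarith
  have hq0 : 0 < 2 * p - 2 := by linarith
  rw [eLpNorm_eq_lintegral_rpow_enorm_toReal (by simpa using hp0) ENNReal.ofReal_ne_top,
    eLpNorm_eq_lintegral_rpow_enorm_toReal (p := 2) (by simp) (by simp),
    eLpNorm_eq_lintegral_rpow_enorm_toReal (p := ENNReal.ofReal (2 * p - 2))
      (by simpa using hq0) ENNReal.ofReal_ne_top,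
    ENNReal.toReal_ofReal hp0.le, ENNReal.toReal_ofReal hq0.le]
  refine ENNReal.rpow_le_rpow ?_ (by positivity)
  have h := ENNReal.lintegral_mul_le_Lp_mul_Lq P (Real.HolderConjugate.two_two)
    (f := fun ω => ‖f ω‖ₑ) (g := fun ω => ‖f ω‖ₑ ^ (p - 1)) hf.enorm
    (hf.enorm.pow_const _)
  refine le_trans (le_of_eq ?_) (h.trans (le_of_eq ?_))
  · refine lintegral_congr fun ω => ?_
    simp only [Pi.mul_apply]
    nth_rewrite 2 [← ENNReal.rpow_one ‖f ω‖ₑ]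
    rw [← ENNReal.rpow_add_of_nonneg _ _ (by norm_num) (by linarith)]
    congr 1
    ring
  · have hp1 : p - 1 ≠ 0 := sub_ne_zero.2 hp.ne'
    rw [← ENNReal.rpow_mul]
    congr 2
    · simp only [← ENNReal.rpow_mul]
      congr 2
      ext ω
      congr 1
      ring
    · field_simp

/-- Convergence to zero in `L²` together with a bound in `L^{2p-2}` gives convergence in `Lᵖ`. -/
lemma tendsto_eLpNorm_of_interp {p : ℝ} (hp : 1 < p) {f : ℕ → Ω → ℝ}
    (hf : ∀ n, AEStronglyMeasurable (f n) P)
    (h2 : Tendsto (fun n => eLpNorm (f n) 2 P) atTop (nhds 0)) {C : ENNReal} (hC : C ≠ ⊤)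
    (hq : ∀ᶠ n in atTop, eLpNorm (f n) (ENNReal.ofReal (2 * p - 2)) P ≤ C) :
    Tendsto (fun n => eLpNorm (f n) (ENNReal.ofReal p) P) atTop (nhds 0) := by
  have hCp : C ^ (p - 1) ≠ ⊤ := ENNReal.rpow_ne_top_of_nonneg (by linarith) hC
  have h : Tendsto (fun n => (eLpNorm (f n) 2 P * C ^ (p - 1)) ^ (1 / p)) atTop (nhds 0) := by
    have h1 := ENNReal.Tendsto.mul_const h2 (Or.inr hCp)
    rw [zero_mul] at h1
    have h3 := (ENNReal.continuous_rpow_const (y := 1 / p)).tendsto 0 |>.comp h1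
    rwa [ENNReal.zero_rpow_of_pos (by positivity)] at h3
  refine tendsto_of_tendsto_of_tendsto_of_le_of_le' tendsto_const_nhds h
    (Eventually.of_forall fun _ => zero_le) ?_
  filter_upwards [hq] with n hn
  refine (eLpNorm_interp hp (hf n)).trans (ENNReal.rpow_le_rpow ?_ (by positivity))
  exact mul_le_mul_right (ENNReal.rpow_le_rpow hn (by linarith)) _

/-- Dominated convergence in `Lᵖ`. -/
lemma tendsto_eLpNorm_of_dominated {p : ENNReal} (hp0 : p ≠ 0) (hp : p ≠ ⊤) {f : ℕ → Ω → ℝ}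
    {g : Ω → ℝ} (hf : ∀ n, AEStronglyMeasurable (f n) P) (hg : MemLp g p P)
    (hfg : ∀ n, ∀ᵐ ω ∂P, |f n ω| ≤ g ω)
    (h0 : ∀ᵐ ω ∂P, Tendsto (fun n => f n ω) atTop (nhds 0)) :
    Tendsto (fun n => eLpNorm (f n) p P) atTop (nhds 0) := by
  have hp' : 0 < p.toReal := ENNReal.toReal_pos hp0 hp
  have h := tendsto_lintegral_of_dominated_convergence' (μ := P)
    (F := fun n ω => ‖f n ω‖ₑ ^ p.toReal) (f := fun _ => 0) (fun ω => ‖g ω‖ₑ ^ p.toReal)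
    (fun n => (hf n).enorm.pow_const _)
    (fun n => by
      filter_upwards [hfg n] with ω hω
      refine ENNReal.rpow_le_rpow ?_ hp'.le
      rw [← ofReal_norm, ← ofReal_norm]
      exact ENNReal.ofReal_le_ofReal (hω.trans (le_abs_self _)))
    (lintegral_rpow_enorm_lt_top_of_eLpNorm_lt_top hp0 hp hg.2).ne
    (by
      filter_upwards [h0] with ω hω
      have h1 := (ENNReal.continuous_rpow_const (y := p.toReal)).tendsto 0 |>.comp
        (by simpa using hω.enorm : Tendsto (fun n => ‖f n ω‖ₑ) atTop (nhds 0))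
      rwa [ENNReal.zero_rpow_of_pos hp'] at h1)
  simp only [lintegral_zero] at h
  have h3 := (ENNReal.continuous_rpow_const (y := 1 / p.toReal)).tendsto 0 |>.comp h
  rw [ENNReal.zero_rpow_of_pos (by positivity)] at h3
  simp_rw [eLpNorm_eq_lintegral_rpow_enorm_toReal hp0 hp]
  exact h3

lemma eLpNorm_mul_le {p r : ENNReal} [ENNReal.HolderTriple r p 2] {f g : Ω → ℝ}
    (hf : AEStronglyMeasurable f P) (hg : AEStronglyMeasurable g P) :
    eLpNorm (fun ω => f ω * g ω) 2 P ≤ eLpNorm f r P * eLpNorm g p P := by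
  have h := eLpNorm_le_eLpNorm_mul_eLpNorm'_of_norm (p := r) (q := p) (r := 2) hf hg
    (fun a b : ℝ => a * b) 1 (Eventually.of_forall fun ω => by simp)
  simpa using h

lemma lintegral_ofReal_sq (f : Ω → ℝ) :
    ∫⁻ ω, ENNReal.ofReal (f ω ^ 2) ∂P = eLpNorm f 2 P ^ 2 := by
  rw [eLpNorm_eq_lintegral_rpow_enorm_toReal (by simp) (by simp)]
  simp only [ENNReal.toReal_ofNat, ENNReal.rpow_ofNat]
  rw [← ENNReal.rpow_natCast, ← ENNReal.rpow_mul]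
  norm_num
  refine lintegral_congr fun ω => ?_
  rw [← sq_abs, ENNReal.ofReal_pow (abs_nonneg _), ← Real.norm_eq_abs, ofReal_norm]

end LpTools

/-! ### Riemann sums against the mean squared increments -/

section Riemann

/-- For a continuous `f`, the sums of `f (k/n)` against the means `meanInc` converge to the
integral: these means are the lengths of the cells `[k/n, (k+1)/n]`, except for the last cell,
whose contribution is `O(1/n)`. -/
lemma tendsto_sum_meanInc {H T t : ℝ} (hH : 0 < H) (ht : t ∈ Set.Icc 0 T) {f : ℝ → ℝ}
    (hf : ContinuousOn f (Set.Icc 0 T)) :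
    Tendsto (fun n : ℕ => ∑ k ∈ Finset.range (⌊(n : ℝ) * t⌋₊ + 1), f ((k : ℝ) / n) *
      meanInc H t n k) atTop (nhds (∫ s in (0 : ℝ)..t, f s)) := by
  obtain ⟨C, hC⟩ := isCompact_Icc.exists_bound_of_continuousOn hf
  have hC0 : 0 ≤ C := (norm_nonneg _).trans (hC t ht)
  have hU := Metric.uniformContinuousOn_iff.1
    (isCompact_Icc.uniformContinuousOn_of_continuous hf)
  rw [Metric.tendsto_atTop]
  intro ε hε
  set η : ℝ := ε / (2 * (t + 1)) with hη
  have ht0 : 0 ≤ t := ht.1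
  have hη0 : 0 < η := by positivity
  obtain ⟨d, hd, hUd⟩ := hU η hη0
  obtain ⟨N1, hN1⟩ := exists_nat_gt (1 / d)
  obtain ⟨N2, hN2⟩ := exists_nat_gt (2 * C / ε)
  refine ⟨max 1 (max N1 N2), fun n hn => ?_⟩
  have hn1 : 1 ≤ n := le_trans (le_max_left _ _) hn
  have hnN1 : (N1 : ℝ) ≤ n := by
    exact_mod_cast le_trans (le_trans (le_max_left _ _) (le_max_right _ _)) hn
  have hnN2 : (N2 : ℝ) ≤ n := by
    exact_mod_cast le_trans (le_trans (le_max_right _ _) (le_max_right _ _)) hn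
  have hn0 : (0 : ℝ) < n := by exact_mod_cast hn1
  have h1n : 1 / (n : ℝ) < d := by
    rw [div_lt_iff₀ hd] at hN1
    rw [div_lt_iff₀ hn0]
    nlinarith
  have hCn : C * (1 / n) < ε / 2 := by
    rw [div_lt_iff₀ hε] at hN2
    rw [mul_one_div, div_lt_iff₀ hn0]
    nlinarith
  set N := ⌊(n : ℝ) * t⌋₊ with hN
  let p : ℕ → ℝ := fun k => min ((k : ℝ) / n) t
  have hpmem : ∀ k, p k ∈ Set.Icc 0 T := fun k =>
    ⟨le_min (by positivity) ht0, (min_le_right _ _).trans ht.2⟩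
  have hpmono : ∀ k, p k ≤ p (k + 1) := fun k =>
    min_le_min_right _ (by push_cast; gcongr; linarith)
  have hint : ∀ k, IntervalIntegrable f volume (p k) (p (k + 1)) := fun k =>
    (hf.mono (by
      rw [Set.uIcc_of_le (hpmono k)]
      exact Set.Icc_subset_Icc (hpmem k).1 (hpmem (k + 1)).2)).intervalIntegrable
  have hp0 : p 0 = 0 := by simp [p, ht0]
  have hpN : p (N + 1) = t := by
    refine min_eq_right ?_
    rw [le_div_iff₀ hn0]
    push_cast
    linarith [Nat.lt_floor_add_one ((n : ℝ) * t)]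
  have hpk : ∀ k ≤ N, p k = (k : ℝ) / n := fun k hk =>
    min_eq_left (div_le_of_le_floor hn1 ht0 hk)
  have hpk1 : ∀ k, p (k + 1) = min (((k : ℝ) + 1) / n) t := fun k => by simp [p]
  have hI : ∫ s in (0 : ℝ)..t, f s = ∑ k ∈ Finset.range (N + 1), ∫ s in p k..p (k + 1), f s := by
    rw [intervalIntegral.sum_integral_adjacent_intervals (fun k _ => hint k), hp0, hpN]
  -- on each cell `f` differs from its value at the left endpoint by at most `η`
  have hcell : ∀ k ∈ Finset.range (N + 1),
      |f ((k : ℝ) / n) * (p (k + 1) - p k) - ∫ s in p k..p (k + 1), f s|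
        ≤ η * (p (k + 1) - p k) := by
    intro k hk
    have hkN : k ≤ N := Nat.lt_succ_iff.1 (Finset.mem_range.1 hk)
    have hlen := (len_mem (k := k) hn1 ht0 hkN).2
    rw [← hpk1, ← hpk k hkN] at hlen
    have : f ((k : ℝ) / n) * (p (k + 1) - p k) - ∫ s in p k..p (k + 1), f s =
        ∫ s in p k..p (k + 1), (f (p k) - f s) := by
      rw [intervalIntegral.integral_sub (by simp) (hint k), intervalIntegral.integral_const,
        hpk k hkN, smul_eq_mul, mul_comm]
    rw [this]
    have h2 := intervalIntegral.norm_integral_le_of_norm_le_const (a := p k) (b := p (k + 1))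
      (C := η) (f := fun s => f (p k) - f s) (fun s hs => by
        rw [Set.uIoc_of_le (hpmono k)] at hs
        have hsm : s ∈ Set.Icc 0 T := ⟨(hpmem k).1.trans hs.1.le, hs.2.trans (hpmem _).2⟩
        have := hUd (p k) (hpmem k) s hsm (by
          rw [Real.dist_eq, abs_sub_comm, abs_of_nonneg (by linarith [hs.1])]
          linarith [hs.2])
        rw [Real.dist_eq] at this
        exact this.le)
    rwa [abs_of_nonneg (sub_nonneg.2 (hpmono k)), Real.norm_eq_abs] at h2
  have hlast : |∑ k ∈ Finset.range (N + 1), f ((k : ℝ) / n) * meanInc H t n k -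
      ∑ k ∈ Finset.range (N + 1), f ((k : ℝ) / n) * (p (k + 1) - p k)| ≤ C * (1 / n) := by
    rw [Finset.sum_range_succ, Finset.sum_range_succ]
    have heq : ∑ k ∈ Finset.range N, f ((k : ℝ) / n) * meanInc H t n k =
        ∑ k ∈ Finset.range N, f ((k : ℝ) / n) * (p (k + 1) - p k) := by
      refine Finset.sum_congr rfl fun k hk => ?_
      have hk' := Finset.mem_range.1 hk
      rw [meanInc_eq hn1 ht0 hk', hpk1, right_eq hn1 ht0 hk', hpk k hk'.le]
      ring
    rw [heq, add_sub_add_left_eq_sub, ← mul_sub, abs_mul]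
    have hlen := len_mem (k := N) hn1 ht0 le_rfl
    rw [← hpk1, ← hpk N le_rfl] at hlen
    refine mul_le_mul (by simpa using hC _ (left_mem hn1 ht le_rfl)) ?_ (abs_nonneg _) hC0
    have h3 := meanInc_le hH hn1 ht0 (le_refl N)
    have h4 : 0 ≤ meanInc H t n N := meanInc_nonneg
    rw [abs_le]
    constructor <;> linarith [hlen.1, hlen.2]
  have hsum : |∑ k ∈ Finset.range (N + 1), f ((k : ℝ) / n) * (p (k + 1) - p k) -
      ∫ s in (0 : ℝ)..t, f s| ≤ η * t := by
    rw [hI, ← Finset.sum_sub_distrib]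
    refine (Finset.abs_sum_le_sum_abs _ _).trans ((Finset.sum_le_sum hcell).trans ?_)
    rw [← Finset.mul_sum, Finset.sum_range_sub, hp0, hpN, sub_zero]
  have hηt : η * t ≤ ε / 2 := by
    rw [hη, div_mul_eq_mul_div, div_le_div_iff₀ (by positivity) (by norm_num)]
    nlinarith
  rw [Real.dist_eq]
  calc _ ≤ _ := abs_sub_le _ _ _
    _ ≤ C * (1 / n) + η * t := add_le_add hlast hsum
    _ < ε := by linarith

end Riemann

/-! ### Suprema and moduli of continuity over grid points -/

section Sup

/-- A countable family of times in `[0,T]`, indexed by pairs `(n, k)`, that contains all the grid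
points `k/n` of `[0,T]`. -/
noncomputable def gridPt (T : ℝ) (i : ℕ × ℕ) : ℝ := min ((i.2 : ℝ) / i.1) T

/-- The largest multiple of `1/m` which does not exceed `s`. -/
noncomputable def floorPt (m : ℕ) (s : ℝ) : ℝ := (⌊(m : ℝ) * s⌋₊ : ℝ) / m

/-- The supremum of `|f|` over the grid points; a countable supremum is measurable in `ω`. -/
noncomputable def gridSup (T : ℝ) (f : ℝ → ℝ) : ℝ := ⨆ i, |f (gridPt T i)|

/-- The largest variation of `f` between a grid point and the preceding multiple of `1/m`. -/
noncomputable def gridOsc (T : ℝ) (m : ℕ) (f : ℝ → ℝ) : ℝ :=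
  ⨆ i, |f (gridPt T i) - f (floorPt m (gridPt T i))|

variable {T : ℝ}

lemma gridPt_mem (hT : 0 ≤ T) (i : ℕ × ℕ) : gridPt T i ∈ Set.Icc 0 T :=
  ⟨le_min (by positivity) hT, min_le_right _ _⟩

lemma gridPt_eq {n k : ℕ} (h : (k : ℝ) / n ∈ Set.Icc 0 T) : gridPt T (n, k) = (k : ℝ) / n :=
  min_eq_left h.2

lemma floorPt_le {m : ℕ} {s : ℝ} (hs : 0 ≤ s) : floorPt m s ≤ s := by
  rcases Nat.eq_zero_or_pos m with rfl | hm
  · simpa [floorPt] using hs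
  · exact div_le_of_le_floor hm hs le_rfl

lemma sub_floorPt_le {m : ℕ} (hm : 1 ≤ m) {s : ℝ} : s - floorPt m s ≤ 1 / m := by
  have hm0 : (0 : ℝ) < m := by exact_mod_cast hm
  have := Nat.lt_floor_add_one ((m : ℝ) * s)
  rw [floorPt, sub_le_iff_le_add, ← add_div, le_div_iff₀ hm0]
  linarith

lemma floorPt_mem {m : ℕ} {s : ℝ} (hs : s ∈ Set.Icc 0 T) : floorPt m s ∈ Set.Icc 0 T :=
  ⟨by unfold floorPt; positivity, (floorPt_le hs.1).trans hs.2⟩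

variable {f : ℝ → ℝ}

lemma bddAbove_grid (hT : 0 ≤ T) (hf : ContinuousOn f (Set.Icc 0 T)) :
    BddAbove (Set.range fun i => |f (gridPt T i)|) := by
  obtain ⟨C, hC⟩ := isCompact_Icc.exists_bound_of_continuousOn hf
  exact ⟨C, by rintro _ ⟨i, rfl⟩; exact hC _ (gridPt_mem hT i)⟩

lemma le_gridSup (hT : 0 ≤ T) (hf : ContinuousOn f (Set.Icc 0 T)) {n k : ℕ}
    (h : (k : ℝ) / n ∈ Set.Icc 0 T) : |f ((k : ℝ) / n)| ≤ gridSup T f := by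
  have := le_ciSup (bddAbove_grid hT hf) (n, k)
  rwa [gridPt_eq h] at this

lemma gridSup_nonneg : 0 ≤ gridSup T f := Real.iSup_nonneg fun _ => abs_nonneg _

lemma gridOsc_nonneg {m : ℕ} : 0 ≤ gridOsc T m f := Real.iSup_nonneg fun _ => abs_nonneg _

lemma gridSup_le (hT : 0 ≤ T) (hf : ContinuousOn f (Set.Icc 0 T)) :
    gridSup T f ≤ ⨆ s : Set.Icc (0 : ℝ) T, |f s| := by
  obtain ⟨C, hC⟩ := isCompact_Icc.exists_bound_of_continuousOn hf
  exact ciSup_le fun i => le_ciSup (f := fun s : Set.Icc (0 : ℝ) T => |f s|)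
    ⟨C, by rintro _ ⟨s, rfl⟩; exact hC _ s.2⟩ ⟨gridPt T i, gridPt_mem hT i⟩

lemma gridOsc_term_le (hT : 0 ≤ T) (hf : ContinuousOn f (Set.Icc 0 T)) (m : ℕ) (i : ℕ × ℕ) :
    |f (gridPt T i) - f (floorPt m (gridPt T i))| ≤ 2 * gridSup T f := by
  have h1 := le_ciSup (bddAbove_grid hT hf) i
  have h2 := le_gridSup hT hf (floorPt_mem (m := m) (gridPt_mem hT i))
  have h3 := abs_sub (f (gridPt T i)) (f (floorPt m (gridPt T i)))
  change |f (gridPt T i)| ≤ gridSup T f at h1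
  change |f (floorPt m (gridPt T i))| ≤ gridSup T f at h2
  linarith

lemma gridOsc_le (hT : 0 ≤ T) (hf : ContinuousOn f (Set.Icc 0 T)) (m : ℕ) :
    gridOsc T m f ≤ 2 * gridSup T f :=
  ciSup_le (gridOsc_term_le hT hf m)

lemma le_gridOsc (hT : 0 ≤ T) (hf : ContinuousOn f (Set.Icc 0 T)) {m n k : ℕ}
    (h : (k : ℝ) / n ∈ Set.Icc 0 T) :
    |f ((k : ℝ) / n) - f (floorPt m ((k : ℝ) / n))| ≤ gridOsc T m f := by
  have := le_ciSup (f := fun i => |f (gridPt T i) - f (floorPt m (gridPt T i))|)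
    ⟨2 * gridSup T f, by rintro _ ⟨i, rfl⟩; exact gridOsc_term_le hT hf m i⟩ (n, k)
  simp only [gridPt_eq h] at this
  exact this

lemma tendsto_gridOsc (hT : 0 ≤ T) (hf : ContinuousOn f (Set.Icc 0 T)) :
    Tendsto (fun m => gridOsc T m f) atTop (nhds 0) := by
  have hU := Metric.uniformContinuousOn_iff.1
    (isCompact_Icc.uniformContinuousOn_of_continuous hf)
  rw [Metric.tendsto_atTop]
  intro ε hε
  obtain ⟨d, hd, hUd⟩ := hU (ε / 2) (half_pos hε)
  obtain ⟨N, hN⟩ := exists_nat_gt (1 / d)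
  refine ⟨max 1 N, fun m hm => ?_⟩
  have hm1 : 1 ≤ m := le_trans (le_max_left _ _) hm
  have hm0 : (0 : ℝ) < m := by exact_mod_cast hm1
  have hmN : (N : ℝ) ≤ m := by exact_mod_cast le_trans (le_max_right _ _) hm
  have h1m : 1 / (m : ℝ) < d := by
    rw [div_lt_iff₀ hd] at hN
    rw [div_lt_iff₀ hm0]
    nlinarith
  rw [Real.dist_0_eq_abs, abs_of_nonneg gridOsc_nonneg]
  refine lt_of_le_of_lt (ciSup_le fun i => ?_) (half_lt_self hε)
  have hs := gridPt_mem hT i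
  have := hUd _ hs _ (floorPt_mem (m := m) hs) (by
    rw [Real.dist_eq, abs_of_nonneg (sub_nonneg.2 (floorPt_le hs.1))]
    exact lt_of_le_of_lt (sub_floorPt_le hm1) h1m)
  exact this.le

variable {Ω : Type*} [MeasurableSpace Ω] {P : Measure Ω} {x : ℝ → Ω → ℝ}

lemma measurable_gridSup (hx : ∀ s, Measurable (x s)) :
    Measurable fun ω => gridSup T fun s => x s ω :=
  Measurable.iSup fun _ => (hx _).abs

lemma measurable_gridOsc (hx : ∀ s, Measurable (x s)) (m : ℕ) :
    Measurable fun ω => gridOsc T m fun s => x s ω :=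
  Measurable.iSup fun _ => ((hx _).sub (hx _)).abs

lemma memLp_gridSup (hT : 0 ≤ T) (hx : ∀ s, Measurable (x s))
    (hc : ∀ᵐ ω ∂P, ContinuousOn (fun s => x s ω) (Set.Icc 0 T)) {r : ℝ} (hr : 0 < r)
    (hint : (∫⁻ ω, ENNReal.ofReal ((⨆ s : Set.Icc (0 : ℝ) T, |x s ω|) ^ r) ∂P) < ⊤) :
    MemLp (fun ω => gridSup T fun s => x s ω) (ENNReal.ofReal r) P := by
  refine ⟨(measurable_gridSup hx).aestronglyMeasurable, ?_⟩
  rw [eLpNorm_lt_top_iff_lintegral_rpow_enorm_lt_top (by simpa using hr) ENNReal.ofReal_ne_top,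
    ENNReal.toReal_ofReal hr.le]
  refine lt_of_le_of_lt (lintegral_mono_ae ?_) hint
  filter_upwards [hc] with ω hω
  rw [← ofReal_norm, Real.norm_eq_abs, abs_of_nonneg gridSup_nonneg,
    ENNReal.ofReal_rpow_of_nonneg gridSup_nonneg hr.le]
  exact ENNReal.ofReal_le_ofReal
    (Real.rpow_le_rpow gridSup_nonneg (gridSup_le hT hω) hr.le)

/-- The moduli of continuity `gridOsc T m x` tend to zero in `Lʳ`, by dominated convergence. -/
lemma tendsto_eLpNorm_gridOsc (hT : 0 ≤ T) (hx : ∀ s, Measurable (x s))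
    (hc : ∀ᵐ ω ∂P, ContinuousOn (fun s => x s ω) (Set.Icc 0 T)) {r : ENNReal} (hr0 : r ≠ 0)
    (hr : r ≠ ⊤) (hM : MemLp (fun ω => gridSup T fun s => x s ω) r P) :
    Tendsto (fun m => eLpNorm (fun ω => gridOsc T m fun s => x s ω) r P) atTop (nhds 0) := by
  refine tendsto_eLpNorm_of_dominated hr0 hr
    (fun m => (measurable_gridOsc hx m).aestronglyMeasurable) (hM.const_mul 2) (fun m => ?_) ?_
  · filter_upwards [hc] with ω hω
    rw [abs_of_nonneg gridOsc_nonneg]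
    exact gridOsc_le hT hω m
  · filter_upwards [hc] with ω hω using tendsto_gridOsc hT hω

end Sup

/-! ### Signed sums of centered squared increments -/

section Convergence

variable {Ω : Type*} {B : ℝ → Ω → ℝ} {H T t : ℝ} {n k : ℕ}

lemma sqInc_nonneg {ω : Ω} : 0 ≤ sqInc H t B n k ω := by unfold sqInc; positivity

/-- The sum of the normalized squared increments and of their means; it dominates every signed sum
of the centered squared increments with coefficients in `[-1, 1]`. -/
noncomputable def totalInc (H t : ℝ) (B : ℝ → Ω → ℝ) (n : ℕ) (ω : Ω) : ℝ :=
  ∑ k ∈ Finset.range (⌊(n : ℝ) * t⌋₊ + 1), (sqInc H t B n k ω + meanInc H t n k)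

lemma abs_sqInc_sub_le {ω : Ω} :
    |sqInc H t B n k ω - meanInc H t n k| ≤ sqInc H t B n k ω + meanInc H t n k := by
  have h1 : 0 ≤ sqInc H t B n k ω := sqInc_nonneg
  have h2 : 0 ≤ meanInc H t n k := meanInc_nonneg
  rw [abs_le]
  constructor <;> linarith

lemma abs_sum_le_totalInc {c : ℕ → ℝ} {M : ℝ}
    (hc : ∀ k ∈ Finset.range (⌊(n : ℝ) * t⌋₊ + 1), |c k| ≤ M) {ω : Ω} :
    |∑ k ∈ Finset.range (⌊(n : ℝ) * t⌋₊ + 1), c k * (sqInc H t B n k ω - meanInc H t n k)| ≤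
      M * totalInc H t B n ω := by
  rw [totalInc, Finset.mul_sum]
  refine (Finset.abs_sum_le_sum_abs _ _).trans (Finset.sum_le_sum fun k hk => ?_)
  rw [abs_mul]
  exact mul_le_mul (hc k hk) abs_sqInc_sub_le (abs_nonneg _) ((abs_nonneg _).trans (hc k hk))

variable [MeasurableSpace Ω] {P : Measure Ω}

lemma IsFBM.eLpNorm_sqInc (hB : IsFBM P H T B) (hH : 0 < H) (hn : 1 ≤ n) (ht : t ∈ Set.Icc 0 T)
    (hk : k ≤ ⌊(n : ℝ) * t⌋₊) (p : ENNReal) :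
    eLpNorm (sqInc H t B n k) p P =
      ENNReal.ofReal (meanInc H t n k) * eLpNorm (fun z : ℝ => z ^ 2) p (gaussianReal 0 1) := by
  have h := eLpNorm_const_smul ((n : ℝ) ^ (2 * H - 1))
    (fun ω => (B (min (((k : ℝ) + 1) / n) t) ω - B ((k : ℝ) / n) ω) ^ 2) p P
  rw [hB.eLpNorm_sq hH (left_mem hn ht hk) (right_mem ht)] at h
  refine Eq.trans h ?_
  rw [meanInc, ENNReal.ofReal_mul (by positivity), mul_assoc, Real.enorm_of_nonneg (by positivity)]

/-- The bound on the `Lᵖ` norms of `totalInc`. -/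
noncomputable def incBound (t : ℝ) (p : ENNReal) : ENNReal :=
  ENNReal.ofReal (t + 1) * (eLpNorm (fun z : ℝ => z ^ 2) p (gaussianReal 0 1) + 1)

lemma incBound_ne_top {p : ENNReal} (hp : p ≠ ⊤) : incBound t p ≠ ⊤ :=
  ENNReal.mul_ne_top ENNReal.ofReal_ne_top
    (ENNReal.add_ne_top.2 ⟨(memLp_sq_gaussianReal p hp).2.ne, by simp⟩)

lemma IsFBM.measurable_totalInc (hB : IsFBM P H T B) : Measurable (totalInc H t B n) :=
  Finset.measurable_fun_sum _ fun _ _ => hB.measurable_sqInc.add_const _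

/-- By Gaussian scaling each squared increment has `Lᵖ` norm proportional to its mean, and the means
add up to at most `t + 1`; the bound is therefore uniform in `n`. -/
lemma IsFBM.eLpNorm_totalInc_le (hB : IsFBM P H T B) [IsProbabilityMeasure P] (hH : 0 < H)
    (hn : 1 ≤ n) (ht : t ∈ Set.Icc 0 T) {p : ENNReal} (hp : 1 ≤ p) :
    eLpNorm (totalInc H t B n) p P ≤ incBound t p := by
  set C := eLpNorm (fun z : ℝ => z ^ 2) p (gaussianReal 0 1) with hC
  have h1 : totalInc H t B n = ∑ k ∈ Finset.range (⌊(n : ℝ) * t⌋₊ + 1),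
      (fun ω => sqInc H t B n k ω + meanInc H t n k) := by
    ext ω
    simp [totalInc]
  rw [h1]
  refine (eLpNorm_sum_le (fun k _ =>
    (hB.measurable_sqInc.add_const _).aestronglyMeasurable) hp).trans ?_
  calc _ ≤ ∑ k ∈ Finset.range (⌊(n : ℝ) * t⌋₊ + 1), ENNReal.ofReal (meanInc H t n k) * (C + 1) := by
        refine Finset.sum_le_sum fun k hk => ?_
        refine (eLpNorm_add_le hB.measurable_sqInc.aestronglyMeasurable
          aestronglyMeasurable_const hp).trans (le_of_eq ?_)
        rw [hB.eLpNorm_sqInc hH hn ht (Nat.lt_succ_iff.1 (Finset.mem_range.1 hk)),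
          eLpNorm_const _ (by positivity) (IsProbabilityMeasure.ne_zero P),
          Real.enorm_of_nonneg meanInc_nonneg]
        simp [mul_add, hC]
    _ ≤ incBound t p := by
        rw [← Finset.sum_mul, incBound, ← ENNReal.ofReal_sum_of_nonneg fun _ _ => meanInc_nonneg]
        gcongr
        exact sum_meanInc_le hH hn ht.1

/-- Signed sums of the centered squared increments, with arbitrary deterministic coefficients in
`[-1, 1]`, tend to zero in `Lᵖ` for every finite `p ≥ 2`: they do so in `L²` by decorrelation of the increments, and
they are bounded in `L^{2p-2}`. -/
lemma IsFBM.tendsto_sum_centered (hB : IsFBM P H T B) [IsProbabilityMeasure P]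
    (hH : H ∈ Set.Ioo (1 / 2 : ℝ) 1) (ht : t ∈ Set.Icc 0 T) {p : ℝ} (hp : 2 ≤ p)
    {c : ℕ → ℕ → ℝ} (hc : ∀ n k, |c n k| ≤ 1) :
    Tendsto (fun n : ℕ => eLpNorm (fun ω => ∑ k ∈ Finset.range (⌊(n : ℝ) * t⌋₊ + 1),
      c n k * (sqInc H t B n k ω - meanInc H t n k)) (ENNReal.ofReal p) P) atTop (nhds 0) := by
  have hH0 : 0 < H := by linarith [hH.1]
  refine tendsto_eLpNorm_of_interp (C := incBound t (ENNReal.ofReal (2 * p - 2)))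
    (by linarith) (fun n => ?_) ?_ (incBound_ne_top ENNReal.ofReal_ne_top) ?_
  · exact (Finset.measurable_fun_sum _ fun k _ =>
      (hB.measurable_sqInc.sub_const _).const_mul _).aestronglyMeasurable
  · obtain ⟨K, hK⟩ := exists_nat_ge (t + 1)
    have hK1 : 1 ≤ K := by
      have : (1 : ℝ) ≤ K := by linarith [ht.1]
      exact_mod_cast this
    have h0 := (ENNReal.tendsto_ofReal (varBound_tendsto hH hK1)).ennrpow_const (1 / 2)
    rw [ENNReal.ofReal_zero, ENNReal.zero_rpow_of_pos (by norm_num)] at h0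
    refine tendsto_of_tendsto_of_tendsto_of_le_of_le' tendsto_const_nhds h0
      (Eventually.of_forall fun _ => zero_le) ?_
    filter_upwards [eventually_ge_atTop 1] with n hn
    obtain ⟨hi, hb⟩ := hB.second_moment_le hH0 hn ht hK (hc n)
    have h2 := lintegral_ofReal_sq (P := P) (fun ω => ∑ k ∈ Finset.range (⌊(n : ℝ) * t⌋₊ + 1),
      c n k * (sqInc H t B n k ω - meanInc H t n k))
    rw [← ofReal_integral_eq_lintegral_ofReal hi
      (Eventually.of_forall fun _ => sq_nonneg _)] at h2
    have h3 := ENNReal.rpow_le_rpow (h2.ge.trans (ENNReal.ofReal_le_ofReal hb))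
      (by norm_num : (0 : ℝ) ≤ 1 / 2)
    refine le_trans (le_of_eq ?_) h3
    rw [← ENNReal.rpow_natCast, ← ENNReal.rpow_mul]
    norm_num
  · filter_upwards [eventually_ge_atTop 1] with n hn
    refine (eLpNorm_mono_ae_real (g := totalInc H t B n) (Eventually.of_forall fun ω => ?_)).trans
      (hB.eLpNorm_totalInc_le hH0 hn ht ?_)
    · simpa using abs_sum_le_totalInc (B := B) (H := H) (M := 1) (ω := ω) fun k _ => hc n k
    · rw [← ENNReal.ofReal_one]
      exact ENNReal.ofReal_le_ofReal (by linarith)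

end Convergence

/-! ### Decomposition of the weighted sum -/

section Assembly

variable {Ω : Type*} {B x : ℝ → Ω → ℝ} {H T t : ℝ}

/-- Decomposition of the weighted sum: freezing the weight at the preceding multiple of `1/m`
leaves an error controlled by the modulus of continuity, finitely many products of a frozen weight
and a sum of centered squared increments with coefficients in `{0, 1}`, and the part carried by the
means. -/
lemma weighted_sum_decomp {m n : ℕ} (hm : 1 ≤ m) (hn : 1 ≤ n) (ht : 0 ≤ t) (y : ℝ → ℝ) (ω : Ω) :
    ∑ k ∈ Finset.range (⌊(n : ℝ) * t⌋₊ + 1), y ((k : ℝ) / n) * sqInc H t B n k ω =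
      ∑ k ∈ Finset.range (⌊(n : ℝ) * t⌋₊ + 1), (y ((k : ℝ) / n) - y (floorPt m ((k : ℝ) / n))) *
        (sqInc H t B n k ω - meanInc H t n k) +
      ∑ j ∈ Finset.range (⌊(m : ℝ) * t⌋₊ + 1), y ((j : ℝ) / m) *
        ∑ k ∈ Finset.range (⌊(n : ℝ) * t⌋₊ + 1),
          (if ⌊(m : ℝ) * ((k : ℝ) / n)⌋₊ = j then (1 : ℝ) else 0) *
            (sqInc H t B n k ω - meanInc H t n k) +
      ∑ k ∈ Finset.range (⌊(n : ℝ) * t⌋₊ + 1), y ((k : ℝ) / n) * meanInc H t n k := by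
  have h : ∑ j ∈ Finset.range (⌊(m : ℝ) * t⌋₊ + 1), y ((j : ℝ) / m) *
        ∑ k ∈ Finset.range (⌊(n : ℝ) * t⌋₊ + 1),
          (if ⌊(m : ℝ) * ((k : ℝ) / n)⌋₊ = j then (1 : ℝ) else 0) *
            (sqInc H t B n k ω - meanInc H t n k) =
      ∑ k ∈ Finset.range (⌊(n : ℝ) * t⌋₊ + 1), y (floorPt m ((k : ℝ) / n)) *
        (sqInc H t B n k ω - meanInc H t n k) := by
    simp_rw [Finset.mul_sum]
    rw [Finset.sum_comm]
    refine Finset.sum_congr rfl fun k hk => ?_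
    have hk' := div_le_of_le_floor hn ht (Nat.lt_succ_iff.1 (Finset.mem_range.1 hk))
    have hj : ⌊(m : ℝ) * ((k : ℝ) / n)⌋₊ ∈ Finset.range (⌊(m : ℝ) * t⌋₊ + 1) :=
      Finset.mem_range.2 (Nat.lt_succ_iff.2 (Nat.floor_le_floor (by gcongr)))
    rw [Finset.sum_eq_single_of_mem _ hj fun j _ hne => by simp [hne.symm]]
    simp [floorPt]
  rw [h, ← Finset.sum_add_distrib, ← Finset.sum_add_distrib]
  exact Finset.sum_congr rfl fun k _ => by ring

variable [MeasurableSpace Ω] {P : Measure Ω}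

/-- The Riemann-type sums with the squared increments replaced by their means converge in `L²` to
the integral, by dominated convergence. -/
lemma tendsto_eLpNorm_mean_part (hH : 0 < H) (ht : t ∈ Set.Icc 0 T)
    (hx : ∀ s, Measurable (x s))
    (hc : ∀ᵐ ω ∂P, ContinuousOn (fun s => x s ω) (Set.Icc 0 T))
    (hM : MemLp (fun ω => gridSup T fun s => x s ω) 2 P) :
    AEStronglyMeasurable (fun ω => ∫ s in (0 : ℝ)..t, x s ω) P ∧
    Tendsto (fun n : ℕ => eLpNorm (fun ω => (∑ k ∈ Finset.range (⌊(n : ℝ) * t⌋₊ + 1),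
      x ((k : ℝ) / n) ω * meanInc H t n k) - ∫ s in (0 : ℝ)..t, x s ω) 2 P) atTop (nhds 0) := by
  have hT : 0 ≤ T := ht.1.trans ht.2
  have hlim : ∀ᵐ ω ∂P, Tendsto (fun n : ℕ => ∑ k ∈ Finset.range (⌊(n : ℝ) * t⌋₊ + 1),
      x ((k : ℝ) / n) ω * meanInc H t n k) atTop (nhds (∫ s in (0 : ℝ)..t, x s ω)) := by
    filter_upwards [hc] with ω hω using tendsto_sum_meanInc hH ht hω
  have hR : ∀ n : ℕ, AEStronglyMeasurable (fun ω => ∑ k ∈ Finset.range (⌊(n : ℝ) * t⌋₊ + 1),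
      x ((k : ℝ) / n) ω * meanInc H t n k) P := fun n =>
    (Finset.measurable_fun_sum _ fun k _ => (hx _).mul_const _).aestronglyMeasurable
  have hI := aestronglyMeasurable_of_tendsto_ae atTop hR hlim
  refine ⟨hI, ?_⟩
  have hbd : ∀ n : ℕ, 1 ≤ n → ∀ᵐ ω ∂P, |∑ k ∈ Finset.range (⌊(n : ℝ) * t⌋₊ + 1),
      x ((k : ℝ) / n) ω * meanInc H t n k| ≤ (t + 1) * gridSup T fun s => x s ω := by
    intro n hn
    filter_upwards [hc] with ω hω
    calc _ ≤ ∑ k ∈ Finset.range (⌊(n : ℝ) * t⌋₊ + 1),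
          (gridSup T fun s => x s ω) * meanInc H t n k := by
          refine (Finset.abs_sum_le_sum_abs _ _).trans (Finset.sum_le_sum fun k hk => ?_)
          rw [abs_mul, abs_of_nonneg meanInc_nonneg]
          exact mul_le_mul_of_nonneg_right (le_gridSup (f := fun s => x s ω) hT hω
            (left_mem hn ht (Nat.lt_succ_iff.1 (Finset.mem_range.1 hk)))) meanInc_nonneg
      _ ≤ _ := by
          rw [← Finset.mul_sum, mul_comm (t + 1)]
          exact mul_le_mul_of_nonneg_left (sum_meanInc_le hH hn ht.1) gridSup_nonneg
  have hbd' : ∀ᵐ ω ∂P, ∀ n : ℕ, 1 ≤ n → |∑ k ∈ Finset.range (⌊(n : ℝ) * t⌋₊ + 1),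
      x ((k : ℝ) / n) ω * meanInc H t n k| ≤ (t + 1) * gridSup T fun s => x s ω := by
    rw [ae_all_iff]
    intro n
    by_cases hn : 1 ≤ n
    · filter_upwards [hbd n hn] with ω hω _ using hω
    · exact Eventually.of_forall fun ω h => absurd h hn
  -- the bound only holds for positive indices, so the sequence is shifted by one
  rw [← tendsto_add_atTop_iff_nat 1]
  refine tendsto_eLpNorm_of_dominated (by simp) (by simp) (fun n => (hR (n + 1)).sub hI)
    (hM.const_mul (2 * (t + 1))) (fun n => ?_) ?_
  · filter_upwards [hbd', hlim] with ω h1 h2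
    have h3 := le_of_tendsto h2.abs ((eventually_ge_atTop 1).mono h1)
    have h4 := h1 (n + 1) (by omega)
    refine (abs_sub _ _).trans ?_
    linarith
  · filter_upwards [hlim] with ω hω
    have := ((tendsto_add_atTop_iff_nat 1).2 hω).sub_const (∫ s in (0 : ℝ)..t, x s ω)
    rwa [sub_self] at this

/-- The exponents `2 + δ` and `2 (2 + δ) / δ` are related by Hölder's inequality with target `2`. -/
lemma holderTriple_two {δ : ℝ} (hδ : 0 < δ) :
    ENNReal.HolderTriple (ENNReal.ofReal (2 + δ)) (ENNReal.ofReal (2 * (2 + δ) / δ)) 2 := by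
  refine ⟨?_⟩
  rw [← ENNReal.ofReal_inv_of_pos (by positivity), ← ENNReal.ofReal_inv_of_pos (by positivity),
    ← ENNReal.ofReal_add (by positivity) (by positivity),
    show (2 : ENNReal) = ENNReal.ofReal 2 by simp, ← ENNReal.ofReal_inv_of_pos (by positivity)]
  congr 1
  field_simp

/-- For each coarse scale `1/m`, the `L²` error is at most the modulus of continuity of the weight
at that scale plus quantities which vanish as `n → ∞`. -/
lemma IsFBM.eLpNorm_error_le (hB : IsFBM P H T B) [IsProbabilityMeasure P] (hH : 0 < H)
    (ht : t ∈ Set.Icc 0 T) (hx : ∀ s, Measurable (x s))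
    (hc : ∀ᵐ ω ∂P, ContinuousOn (fun s => x s ω) (Set.Icc 0 T))
    (hI : AEStronglyMeasurable (fun ω => ∫ s in (0 : ℝ)..t, x s ω) P)
    {r p : ENNReal} [ENNReal.HolderTriple r p 2] (hp : 1 ≤ p) {m n : ℕ} (hm : 1 ≤ m)
    (hn : 1 ≤ n) :
    eLpNorm (fun ω => (∑ k ∈ Finset.range (⌊(n : ℝ) * t⌋₊ + 1),
        x ((k : ℝ) / n) ω * sqInc H t B n k ω) - ∫ s in (0 : ℝ)..t, x s ω) 2 P ≤
      eLpNorm (fun ω => gridOsc T m fun s => x s ω) r P * incBound t p +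
      (∑ j ∈ Finset.range (⌊(m : ℝ) * t⌋₊ + 1), eLpNorm (x ((j : ℝ) / m)) r P *
        eLpNorm (fun ω => ∑ k ∈ Finset.range (⌊(n : ℝ) * t⌋₊ + 1),
          (if ⌊(m : ℝ) * ((k : ℝ) / n)⌋₊ = j then (1 : ℝ) else 0) *
            (sqInc H t B n k ω - meanInc H t n k)) p P) +
      eLpNorm (fun ω => (∑ k ∈ Finset.range (⌊(n : ℝ) * t⌋₊ + 1),
        x ((k : ℝ) / n) ω * meanInc H t n k) - ∫ s in (0 : ℝ)..t, x s ω) 2 P := by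
  have hT : 0 ≤ T := ht.1.trans ht.2
  have mb : ∀ k, Measurable fun ω => sqInc H t B n k ω - meanInc H t n k := fun k =>
    hB.measurable_sqInc.sub_const _
  have mD : ∀ j, AEStronglyMeasurable (fun ω => ∑ k ∈ Finset.range (⌊(n : ℝ) * t⌋₊ + 1),
      (if ⌊(m : ℝ) * ((k : ℝ) / n)⌋₊ = j then (1 : ℝ) else 0) *
        (sqInc H t B n k ω - meanInc H t n k)) P := fun j =>
    (Finset.measurable_fun_sum _ fun k _ => (mb k).const_mul _).aestronglyMeasurable
  have e1 : eLpNorm (fun ω => ∑ k ∈ Finset.range (⌊(n : ℝ) * t⌋₊ + 1),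
      (x ((k : ℝ) / n) ω - x (floorPt m ((k : ℝ) / n)) ω) *
        (sqInc H t B n k ω - meanInc H t n k)) 2 P ≤
      eLpNorm (fun ω => gridOsc T m fun s => x s ω) r P * incBound t p := by
    calc _ ≤ eLpNorm (fun ω => (gridOsc T m fun s => x s ω) * totalInc H t B n ω) 2 P := by
          refine eLpNorm_mono_ae_real ?_
          filter_upwards [hc] with ω hω
          refine abs_sum_le_totalInc fun k hk => ?_
          exact le_gridOsc (f := fun s => x s ω) hT hω
            (left_mem hn ht (Nat.lt_succ_iff.1 (Finset.mem_range.1 hk)))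
      _ ≤ eLpNorm (fun ω => gridOsc T m fun s => x s ω) r P * eLpNorm (totalInc H t B n) p P :=
          eLpNorm_mul_le (measurable_gridOsc hx m).aestronglyMeasurable
            hB.measurable_totalInc.aestronglyMeasurable
      _ ≤ _ := by gcongr; exact hB.eLpNorm_totalInc_le hH hn ht hp
  have e2 : eLpNorm (∑ j ∈ Finset.range (⌊(m : ℝ) * t⌋₊ + 1), fun ω => x ((j : ℝ) / m) ω *
      ∑ k ∈ Finset.range (⌊(n : ℝ) * t⌋₊ + 1),
        (if ⌊(m : ℝ) * ((k : ℝ) / n)⌋₊ = j then (1 : ℝ) else 0) *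
          (sqInc H t B n k ω - meanInc H t n k)) 2 P ≤ _ :=
    (eLpNorm_sum_le (fun j _ => (hx _).aestronglyMeasurable.mul (mD j)) (by norm_num)).trans
      (Finset.sum_le_sum fun j _ =>
        eLpNorm_mul_le (r := r) (p := p) (hx _).aestronglyMeasurable (mD j))
  have m1 : AEStronglyMeasurable (fun ω => ∑ k ∈ Finset.range (⌊(n : ℝ) * t⌋₊ + 1),
      (x ((k : ℝ) / n) ω - x (floorPt m ((k : ℝ) / n)) ω) *
        (sqInc H t B n k ω - meanInc H t n k)) P :=
    (Finset.measurable_fun_sum _ fun k _ =>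
      ((hx _).sub (hx _)).mul (mb k)).aestronglyMeasurable
  have m2 : AEStronglyMeasurable (∑ j ∈ Finset.range (⌊(m : ℝ) * t⌋₊ + 1),
      fun ω => x ((j : ℝ) / m) ω * ∑ k ∈ Finset.range (⌊(n : ℝ) * t⌋₊ + 1),
        (if ⌊(m : ℝ) * ((k : ℝ) / n)⌋₊ = j then (1 : ℝ) else 0) *
          (sqInc H t B n k ω - meanInc H t n k)) P :=
    Finset.aestronglyMeasurable_sum _ fun j _ => (hx _).aestronglyMeasurable.mul (mD j)
  have m3 : AEStronglyMeasurable (fun ω => (∑ k ∈ Finset.range (⌊(n : ℝ) * t⌋₊ + 1),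
      x ((k : ℝ) / n) ω * meanInc H t n k) - ∫ s in (0 : ℝ)..t, x s ω) P :=
    (Finset.measurable_fun_sum _ fun k _ => (hx _).mul_const _).aestronglyMeasurable.sub hI
  refine le_trans (le_of_eq ?_) ((eLpNorm_add_le (m1.add m2) m3 (by norm_num)).trans
    (add_le_add ((eLpNorm_add_le m1 m2 (by norm_num)).trans (add_le_add e1 e2)) le_rfl))
  congr 1
  ext ω
  rw [weighted_sum_decomp hm hn ht.1 (fun s => x s ω) ω]
  simp only [Pi.add_apply, Finset.sum_apply]
  ring

end Assembly

/-! ### Convergence of the weighted quadratic variation -/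

/-- weighted quadratic variation of fBm with Hurst index `H ∈ (1/2,1)`.
If `x` is σ(B)-measurable, jointly measurable, a.s. continuous, with
`E[(sup_{s∈[0,T]}|x_s|)^{2+δ}] < ∞`, then for each fixed `t ∈ [0,T]`,
`n^{2H-1} Σ_{k=0}^{⌊nt⌋} x_{k/n} (B_{min((k+1)/n, t)} - B_{k/n})² → ∫_0^t x_s ds`
in `L²(Ω)`. -/
theorem weighted_quadratic_variation
    (T H : ℝ) (hT : 0 < T) (hH : H ∈ Set.Ioo (1 / 2 : ℝ) 1)
    {Ω : Type*} [MeasurableSpace Ω] (P : Measure Ω) [IsProbabilityMeasure P]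
    (B : ℝ → Ω → ℝ) (hB : IsFBM P H T B)
    (x : ℝ → Ω → ℝ)
    (hxmeas : Measurable (Function.uncurry x))
    (hxB : ∀ s ∈ Set.Icc (0 : ℝ) T, Measurable[sigmaB T B] (x s))
    (hxcont : ∀ᵐ ω ∂P, ContinuousOn (fun s => x s ω) (Set.Icc 0 T))
    (δ : ℝ) (hδ : 0 < δ)
    (hxint : (∫⁻ ω, ENNReal.ofReal
        ((⨆ s : Set.Icc (0 : ℝ) T, |x s ω|) ^ (2 + δ)) ∂P) < ⊤)
    (t : ℝ) (ht : t ∈ Set.Icc (0 : ℝ) T) :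
    Tendsto (fun n : ℕ =>
        ∫⁻ ω, ENNReal.ofReal
          ((((n : ℝ) ^ (2 * H - 1) *
              ∑ k ∈ Finset.range (⌊(n : ℝ) * t⌋₊ + 1),
                x ((k : ℝ) / n) ω *
                  (B (min (((k : ℝ) + 1) / n) t) ω - B ((k : ℝ) / n) ω) ^ 2) -
            ∫ s in (0 : ℝ)..t, x s ω) ^ 2) ∂P)
      atTop (nhds 0) := by
  have hH0 : 0 < H := by linarith [hH.1]
  have hT0 : 0 ≤ T := hT.le
  have hx : ∀ s, Measurable (x s) := fun s => hxmeas.comp measurable_prodMk_left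
  have hr0 : 0 < 2 + δ := by linarith
  have hp2 : 2 ≤ 2 * (2 + δ) / δ := by
    rw [le_div_iff₀ hδ]
    linarith
  set p := ENNReal.ofReal (2 * (2 + δ) / δ) with hp
  have hp1 : 1 ≤ p := by
    rw [hp, ← ENNReal.ofReal_one]
    exact ENNReal.ofReal_le_ofReal (by linarith)
  have htr : ENNReal.HolderTriple (ENNReal.ofReal (2 + δ)) p 2 := holderTriple_two hδ
  have hMr := memLp_gridSup hT0 hx hxcont hr0 hxint
  have hM2 : MemLp (fun ω => gridSup T fun s => x s ω) 2 P := hMr.mono_exponent (by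
    rw [show (2 : ENNReal) = ENNReal.ofReal 2 by simp]
    exact ENNReal.ofReal_le_ofReal (by linarith))
  obtain ⟨hI, hmean⟩ := tendsto_eLpNorm_mean_part hH0 ht hx hxcont hM2
  have hosc := tendsto_eLpNorm_gridOsc hT0 hx hxcont (by simpa using hr0)
    ENNReal.ofReal_ne_top hMr
  have hosc' := ENNReal.Tendsto.mul_const (b := incBound t p) hosc
    (Or.inr (incBound_ne_top ENNReal.ofReal_ne_top))
  rw [zero_mul] at hosc'
  have key : Tendsto (fun n : ℕ => eLpNorm (fun ω =>
      (∑ k ∈ Finset.range (⌊(n : ℝ) * t⌋₊ + 1), x ((k : ℝ) / n) ω * sqInc H t B n k ω) -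
        ∫ s in (0 : ℝ)..t, x s ω) 2 P) atTop (nhds 0) := by
    rw [ENNReal.tendsto_nhds_zero]
    intro ε hε
    have hε2 : 0 < ε / 2 := ENNReal.half_pos hε.ne'
    -- the coarse scale is fixed before letting `n` tend to infinity
    obtain ⟨m, hm, hm1⟩ :=
      ((ENNReal.tendsto_nhds_zero.1 hosc' _ hε2).and (eventually_ge_atTop 1)).exists
    have hD : Tendsto (fun n : ℕ => (∑ j ∈ Finset.range (⌊(m : ℝ) * t⌋₊ + 1),
        eLpNorm (x ((j : ℝ) / m)) (ENNReal.ofReal (2 + δ)) P *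
          eLpNorm (fun ω => ∑ k ∈ Finset.range (⌊(n : ℝ) * t⌋₊ + 1),
            (if ⌊(m : ℝ) * ((k : ℝ) / n)⌋₊ = j then (1 : ℝ) else 0) *
              (sqInc H t B n k ω - meanInc H t n k)) p P) +
        eLpNorm (fun ω => (∑ k ∈ Finset.range (⌊(n : ℝ) * t⌋₊ + 1),
          x ((k : ℝ) / n) ω * meanInc H t n k) - ∫ s in (0 : ℝ)..t, x s ω) 2 P)
        atTop (nhds 0) := by
      have h1 := tendsto_finsetSum (Finset.range (⌊(m : ℝ) * t⌋₊ + 1))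
        (f := fun (j n : ℕ) => eLpNorm (x ((j : ℝ) / m)) (ENNReal.ofReal (2 + δ)) P *
          eLpNorm (fun ω => ∑ k ∈ Finset.range (⌊(n : ℝ) * t⌋₊ + 1),
            (if ⌊(m : ℝ) * ((k : ℝ) / n)⌋₊ = j then (1 : ℝ) else 0) *
              (sqInc H t B n k ω - meanInc H t n k)) p P) (a := fun _ => 0) (x := atTop)
        (fun j hj => by
          have hxj : eLpNorm (x ((j : ℝ) / m)) (ENNReal.ofReal (2 + δ)) P ≠ ⊤ := by
            refine ((eLpNorm_mono_ae_real ?_).trans_lt hMr.2).ne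
            filter_upwards [hxcont] with ω hω
            exact le_gridSup (f := fun s => x s ω) hT0 hω
              (left_mem hm1 ht (Nat.lt_succ_iff.1 (Finset.mem_range.1 hj)))
          have h2 := ENNReal.Tendsto.const_mul (hB.tendsto_sum_centered hH ht hp2
            (c := fun n k => if ⌊(m : ℝ) * ((k : ℝ) / n)⌋₊ = j then (1 : ℝ) else 0)
            (fun n k => by split_ifs <;> simp)) (Or.inr hxj)
          rwa [mul_zero] at h2)
      simpa using h1.add hmean
    filter_upwards [ENNReal.tendsto_nhds_zero.1 hD _ hε2, eventually_ge_atTop 1] with n h1 hn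
    refine (hB.eLpNorm_error_le hH0 ht hx hxcont hI (r := ENNReal.ofReal (2 + δ)) hp1 hm1
      hn).trans ?_
    rw [add_assoc]
    exact (add_le_add hm h1).trans (ENNReal.add_halves ε).le
  have hsq := (ENNReal.continuous_pow 2).tendsto 0 |>.comp key
  simp only [ne_eq, OfNat.ofNat_ne_zero, not_false_eq_true, zero_pow] at hsq
  refine hsq.congr fun n => ?_
  rw [Function.comp, ← lintegral_ofReal_sq]
  refine lintegral_congr fun ω => ?_
  rw [Finset.mul_sum]
  congr 4
  ext k
  rw [sqInc]
  ring
end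

section
/- Let H ∈ [1/2, 1) and T > 0. There exists a constant C > 0, depending only on H and T, such that for all integers n ≥ 1 and all t ∈ [0,T]: Σ_{k=0}^{⌊nt⌋} Σ_{l=0}^{⌊nt⌋} | r_H( k/n, min((k+1)/n, t), l/n, min((l+1)/n, t) ) | ≤ C. -/
lemma abs_rpow_combo_le {p : ℝ} (hp : 1 ≤ p) (a d l m : ℝ) (hl : 0 ≤ l) (hm : 0 ≤ m)
    (hlm : l + m = 1) : |l * a + m * d| ^ p ≤ l * |a| ^ p + m * |d| ^ p := by
  have h1 : |l * a + m * d| ≤ l * |a| + m * |d| := by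
    calc |l * a + m * d| ≤ |l * a| + |m * d| := abs_add_le _ _
      _ = l * |a| + m * |d| := by rw [abs_mul, abs_mul, abs_of_nonneg hl, abs_of_nonneg hm]
  calc |l * a + m * d| ^ p ≤ (l * |a| + m * |d|) ^ p :=
        Real.rpow_le_rpow (abs_nonneg _) h1 (by linarith)
    _ ≤ l * |a| ^ p + m * |d| ^ p := by
        simpa using (convexOn_rpow hp).2 (Set.mem_Ici.2 (abs_nonneg a))
          (Set.mem_Ici.2 (abs_nonneg d)) hl hm hlm

/-- Among pairs with a fixed sum, the outer pair `a, d` has the larger sum of values of the convex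
function `|·| ^ p`, because `b` and `c` are complementary convex combinations of `a` and `d`. -/
lemma abs_rpow_add_le {p : ℝ} (hp : 1 ≤ p) {a b c d : ℝ} (hab : a ≤ b) (hac : a ≤ c)
    (h : a + d = b + c) : |b| ^ p + |c| ^ p ≤ |a| ^ p + |d| ^ p := by
  rcases (show a ≤ d by linarith).eq_or_lt with had | had
  · have hb : b = a := by linarith
    have hc : c = d := by linarith
    rw [hb, hc]
  · have hpos : 0 < d - a := by linarith
    have hl : 0 ≤ (d - b) / (d - a) := div_nonneg (by linarith) hpos.le
    have hm : 0 ≤ (b - a) / (d - a) := div_nonneg (by linarith) hpos.le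
    have hlm : (d - b) / (d - a) + (b - a) / (d - a) = 1 := by
      field_simp
      ring
    have hb : (d - b) / (d - a) * a + (b - a) / (d - a) * d = b := by
      field_simp
      ring
    generalize (d - b) / (d - a) = l at *
    generalize (b - a) / (d - a) = m at *
    have hc : m * a + l * d = c := by
      linear_combination (a + d) * hlm - hb + h
    have h1 := abs_rpow_combo_le hp a d l m hl hm hlm
    have h2 := abs_rpow_combo_le hp a d m l hm hl (by linarith)
    rw [hb] at h1
    rw [hc] at h2
    linear_combination h1 + h2 + (|a| ^ p + |d| ^ p) * hlm

lemma rH_nonneg {H s t x y : ℝ} (hH : 1 / 2 ≤ H) (hst : s ≤ t) (hxy : x ≤ y) :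
    0 ≤ rH H s t x y := by
  have := abs_rpow_add_le (p := 2 * H) (by linarith) (a := s - y) (b := s - x) (c := t - y)
    (d := t - x) (by linarith) (by linarith) (by ring)
  unfold rH
  linarith

/-- The covariance is additive in both intervals, so its double sum over a partition telescopes. -/
lemma sum_sum_rH (H : ℝ) (p : ℕ → ℝ) (N : ℕ) :
    ∑ k ∈ Finset.range N, ∑ l ∈ Finset.range N, rH H (p k) (p (k + 1)) (p l) (p (l + 1)) =
      rH H (p 0) (p N) (p 0) (p N) := by
  have inner (s t : ℝ) :
      ∑ l ∈ Finset.range N, rH H s t (p l) (p (l + 1)) = rH H s t (p 0) (p N) := by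
    have h := Finset.sum_range_sub (fun l => rH H s t (p 0) (p l)) N
    calc _ = ∑ l ∈ Finset.range N, (rH H s t (p 0) (p (l + 1)) - rH H s t (p 0) (p l)) :=
          Finset.sum_congr rfl fun l _ => by unfold rH; ring
      _ = _ := by rw [h]; unfold rH; ring
  simp_rw [inner]
  have h := Finset.sum_range_sub (fun k => rH H (p 0) (p k) (p 0) (p N)) N
  calc _ = ∑ k ∈ Finset.range N,
          (rH H (p 0) (p (k + 1)) (p 0) (p N) - rH H (p 0) (p k) (p 0) (p N)) :=
        Finset.sum_congr rfl fun k _ => by unfold rH; ring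
    _ = _ := by rw [h]; unfold rH; ring

lemma rH_self {H t : ℝ} (hH : 1 / 2 ≤ H) (ht : 0 ≤ t) : rH H 0 t 0 t = t ^ (2 * H) := by
  have h0 : (0 : ℝ) ^ (2 * H) = 0 := Real.zero_rpow (by linarith)
  simp [rH, h0, abs_of_nonneg ht]


/-- for `H ∈ [1/2, 1)` and `T > 0`, there is `C > 0` (depending only on
`H` and `T`) bounding, uniformly in `n ≥ 1` and `t ∈ [0,T]`, the double sum
`Σ_{k,l=0}^{⌊nt⌋} |r_H(k/n, min((k+1)/n, t), l/n, min((l+1)/n, t))|`. -/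
theorem rH_double_sum_bound
    (H T : ℝ) (hH : H ∈ Set.Ico (1 / 2 : ℝ) 1) (hT : 0 < T) :
    ∃ C : ℝ, 0 < C ∧ ∀ n : ℕ, 1 ≤ n → ∀ t ∈ Set.Icc (0 : ℝ) T,
      (∑ k ∈ Finset.range (⌊(n : ℝ) * t⌋₊ + 1),
          ∑ l ∈ Finset.range (⌊(n : ℝ) * t⌋₊ + 1),
            |rH H ((k : ℝ) / n) (min (((k : ℝ) + 1) / n) t)
              ((l : ℝ) / n) (min (((l : ℝ) + 1) / n) t)|) ≤ C := by
  refine ⟨T ^ (2 * H), Real.rpow_pos_of_pos hT _, fun n hn t ht => ?_⟩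
  have hn0 : (0 : ℝ) < n := by exact_mod_cast hn
  have hnt : 0 ≤ (n : ℝ) * t := mul_nonneg hn0.le ht.1
  set N := ⌊(n : ℝ) * t⌋₊ with hN
  let p : ℕ → ℝ := fun k => min ((k : ℝ) / n) t
  have hmono : Monotone p := fun i j hij => by
    have : (i : ℝ) ≤ j := by exact_mod_cast hij
    exact min_le_min_right t (by gcongr)
  have hp (k : ℕ) (hk : k ∈ Finset.range (N + 1)) : (k : ℝ) / n = p k := by
    have hk' : k ≤ N := Nat.lt_succ_iff.1 (Finset.mem_range.1 hk)
    have h : (k : ℝ) ≤ n * t := (Nat.le_floor_iff hnt).1 hk'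
    exact (min_eq_left ((div_le_iff₀' hn0).2 h)).symm
  have hp' (k : ℕ) : min (((k : ℝ) + 1) / n) t = p (k + 1) := by simp [p]
  have hp0 : p 0 = 0 := by simp [p, ht.1]
  have hpN : p (N + 1) = t := by
    rw [← hp']
    exact min_eq_right ((le_div_iff₀' hn0).2 (Nat.lt_floor_add_one _).le)
  calc _ = ∑ k ∈ Finset.range (N + 1), ∑ l ∈ Finset.range (N + 1),
          rH H (p k) (p (k + 1)) (p l) (p (l + 1)) := by
        refine Finset.sum_congr rfl fun k hk => Finset.sum_congr rfl fun l hl => ?_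
        rw [hp', hp', hp k hk, hp l hl]
        exact abs_of_nonneg (rH_nonneg hH.1 (hmono k.le_succ) (hmono l.le_succ))
    _ = t ^ (2 * H) := by rw [sum_sum_rH, hp0, hpN, rH_self hH.1 ht.1]
    _ ≤ T ^ (2 * H) := Real.rpow_le_rpow ht.1 ht.2 (by linarith [hH.1])
end
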